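/- arXiv:1406.7229 — 3 statements merged into one kernel-verified Lean document; each statement's English description precedes it below -/
import Mathlib

section
/- For every integer m ≥ 2 and every real p > 1 there exists a constant C = C(p,m), independent of N, such that for every integer N ≥ 1 and every f : G → ℂ, the distant spherical maximal function M^D f(x) = max over integers 0 ≤ k ≤ N/(m+1) of |(σ_{N−k} * f)(x)| satisfies ‖M^D f‖_{L^p(G)} ≤ C · ‖f‖_{L^p(G)}. -/
open Finset

noncomputable section

/-- Hamming weight on `(ℤ/(m+1)ℤ)^N`. -/
def hw {m N : ℕ} (y : Fin N → ZMod (m + 1)) : ℕ :=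
  (Finset.univ.filter fun i => y i ≠ 0).card

/-- `L¹`-normalized indicator of the sphere of radius `r` (zero if `r < 0` or `r > N`). -/
def sigmaC (m N : ℕ) (r : ℤ) : (Fin N → ZMod (m + 1)) → ℂ := fun x =>
  if (hw x : ℤ) = r then
    ((Finset.univ.filter fun y : Fin N → ZMod (m + 1) => (hw y : ℤ) = r).card : ℂ)⁻¹
  else 0

/-- Convolution on `(ℤ/(m+1)ℤ)^N`. -/
def convC {m N : ℕ} (g f : (Fin N → ZMod (m + 1)) → ℂ) : (Fin N → ZMod (m + 1)) → ℂ :=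
  fun x => ∑ y, g y * f (x - y)

/-- The distant spherical maximal function `M^D f (x) = max_{0 ≤ k ≤ N/(m+1)} |(σ_{N-k} * f)(x)|`.
The integers `k` with `0 ≤ k ≤ N/(m+1)` are exactly those with `k ≤ ⌊N/(m+1)⌋`
(natural division). -/
def distantMax (m N : ℕ) (f : (Fin N → ZMod (m + 1)) → ℂ) (x : Fin N → ZMod (m + 1)) : ℝ :=
  (Finset.range (N / (m + 1) + 1)).sup' Finset.nonempty_range_add_one fun k =>
    ‖convC (sigmaC m N ((N : ℤ) - k)) f x‖

/-!
Regard the sphere mean `σ_{N-k}` as a function of the number `k` of vanishing coordinates. The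
Bernstein operator in `k` turns it into the product kernel under which each coordinate vanishes
independently with probability `k / N`. These kernels mix the two extreme ones (no coordinate, or
every coordinate, vanishes) with the uniform kernel, so they are binomial averages of conditional
means over random coordinate sets; Doob's inequality along random orderings of the coordinates
bounds their maximal function on every `L^p`, `p > 1`, uniformly in `N`.

It remains to bound the image of `σ_{N-k}` under a power `(1 - B)^L` of the Bernstein defect. Its
Fourier coefficients are `(1 - B)^L` applied to Krawtchouk polynomials. In low degree `j ≲ log N`
each application of `1 - B` gains `j² / N`; in high degree the Krawtchouk polynomial is
exponentially small for `k ≤ N / (m + 1)`, and `B` barely spoils this. So for `L` large the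
coefficients are `O(N^{-M})`, and interpolating `L²` with `L¹` beats the crude sum over the `O(N)`
radii when `p ≤ 2`. The case `p > 2` follows from `p = 2` by Jensen's inequality.
-/

open scoped BigOperators

/-! ### Conditional means on product spaces and Doob's inequality -/

section CondMean

variable {ι α : Type*} [Fintype ι] [DecidableEq ι] [Fintype α]

/-- The conditional expectation of `f` given the coordinates in `S`, for the uniform distribution
on `ι → α`. -/
def condMean (S : Finset ι) (f : (ι → α) → ℝ) (x : ι → α) : ℝ :=
  𝔼 y, f (S.piecewise x y)

lemma condMean_nonneg (S : Finset ι) {f : (ι → α) → ℝ} (hf : 0 ≤ f) : 0 ≤ condMean S f :=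
  fun _ => expect_nonneg fun _ _ => hf _

lemma dependsOn_condMean (S : Finset ι) (f : (ι → α) → ℝ) : DependsOn (condMean S f) S := by
  intro x y hxy
  exact expect_congr rfl fun z _ => congrArg f (S.piecewise_congr hxy fun _ _ => rfl)

lemma sum_sum_piecewise (S : Finset ι) (F : (ι → α) → ℝ) :
    ∑ x, ∑ y, F (S.piecewise x y) = ∑ x, ∑ _y : ι → α, F x := by
  let swapOutside : (ι → α) × (ι → α) → (ι → α) × (ι → α) :=
    fun q => (S.piecewise q.1 q.2, S.piecewise q.2 q.1)
  have hinv : Function.Involutive swapOutside := by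
    rintro ⟨x, y⟩
    ext i <;> by_cases hi : i ∈ S <;> simp [swapOutside, hi]
  rw [← Fintype.sum_prod_type', ← Fintype.sum_prod_type']
  exact Equiv.sum_comp hinv.toPerm fun q : (ι → α) × (ι → α) => F q.1

lemma sum_expect_piecewise (S : Finset ι) (F : (ι → α) → ℝ) :
    ∑ x, 𝔼 y, F (S.piecewise x y) = ∑ x, F x := by
  cases isEmpty_or_nonempty (ι → α)
  · simp
  · simp only [Fintype.expect_eq_sum_div_card, ← sum_div, sum_sum_piecewise, sum_const,
      card_univ, nsmul_eq_mul, ← mul_sum]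
    field_simp

lemma sum_mul_condMean {S : Finset ι} {g : (ι → α) → ℝ} (hg : DependsOn g S) (f : (ι → α) → ℝ) :
    ∑ x, g x * condMean S f x = ∑ x, g x * f x := by
  rw [← sum_expect_piecewise S fun x => g x * f x]
  refine sum_congr rfl fun x _ => ?_
  unfold condMean
  rw [mul_expect]
  refine expect_congr rfl fun y _ => ?_
  rw [hg fun i hi => S.piecewise_eq_of_mem x y (mem_coe.1 hi)]

lemma dependsOn_partialSups_condMean {S : ℕ → Finset ι} (hS : Monotone S) (f : (ι → α) → ℝ)
    (n : ℕ) : DependsOn (partialSups (fun l => condMean (S l) f) n) (S n) := by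
  induction n with
  | zero => simpa only [partialSups_zero] using dependsOn_condMean (S 0) f
  | succ n ih =>
    intro x y hxy
    rw [partialSups_add_one, Pi.sup_apply, Pi.sup_apply, dependsOn_condMean _ _ hxy,
      ih fun i hi => hxy i (hS n.le_succ hi)]

lemma partialSups_condMean_nonneg (S : ℕ → Finset ι) {f : (ι → α) → ℝ} (hf : 0 ≤ f) (n : ℕ) :
    0 ≤ partialSups (fun l => condMean (S l) f) n :=
  (condMean_nonneg (S 0) hf).trans (le_partialSups_of_le (fun l => condMean (S l) f) n.zero_le)

lemma rpow_sub_one_mul_self {y p : ℝ} (hy : 0 ≤ y) (hp : 1 < p) : y ^ (p - 1) * y = y ^ p := by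
  simpa using (Real.rpow_add_of_nonneg hy (sub_nonneg.2 hp.le) zero_le_one).symm

lemma mul_rpow_sub_one_mul_le {p y b : ℝ} (hp : 1 < p) (hy : 0 ≤ y) (hb : 0 ≤ b) :
    p * (y ^ (p - 1) * b) ≤ (p - 1) * y ^ p + b ^ p := by
  have hp' : p - 1 ≠ 0 := (sub_pos.2 hp).ne'
  have young := Real.young_inequality_of_nonneg (Real.rpow_nonneg hy (p - 1)) hb
    (Real.HolderConjugate.conjExponent hp).symm
  rw [← Real.rpow_mul hy, Real.conjExponent, mul_div_cancel₀ _ hp'] at young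
  calc p * (y ^ (p - 1) * b) ≤ p * (y ^ p / (p / (p - 1)) + b ^ p / p) := by gcongr
    _ = (p - 1) * y ^ p + b ^ p := by field_simp

lemma max_rpow_sub_le {p y b : ℝ} (hp : 1 < p) (hy : 0 ≤ y) (hb : 0 ≤ b) :
    max y b ^ p - p / (p - 1) * (max y b ^ (p - 1) * b) ≤
      y ^ p - p / (p - 1) * (y ^ (p - 1) * b) := by
  rcases le_total b y with h | h
  · rw [max_eq_left h]
  · rw [max_eq_right h, rpow_sub_one_mul_self hb hp]
    have hp' : 0 < p - 1 := sub_pos.2 hp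
    have young : p / (p - 1) * (y ^ (p - 1) * b) ≤ y ^ p + b ^ p / (p - 1) := by
      rw [div_mul_eq_mul_div, div_le_iff₀ hp', add_mul, div_mul_cancel₀ _ hp'.ne', mul_comm (y ^ p)]
      exact mul_rpow_sub_one_mul_le hp hy hb
    have split : p / (p - 1) * b ^ p = b ^ p + b ^ p / (p - 1) := by field_simp; ring
    linarith

variable {S : ℕ → Finset ι} {f : (ι → α) → ℝ} {p : ℝ}

lemma sum_partialSups_condMean_rpow_le_mul_sum (hS : Monotone S) (hf : 0 ≤ f) (hp : 1 < p)
    (n : ℕ) :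
    ∑ x, partialSups (fun l => condMean (S l) f) n x ^ p ≤
      p / (p - 1) * ∑ x, partialSups (fun l => condMean (S l) f) n x ^ (p - 1) * f x := by
  set Y : ℕ → (ι → α) → ℝ := fun n => partialSups (fun l => condMean (S l) f) n with hY
  have replace_f {k l : ℕ} (hkl : k ≤ l) :
      ∑ x, Y k x ^ (p - 1) * f x = ∑ x, Y k x ^ (p - 1) * condMean (S l) f x := by
    refine (sum_mul_condMean (fun x y hxy => ?_) f).symm
    have hdep := (dependsOn_partialSups_condMean hS f k).mono (coe_subset.2 (hS hkl))
    exact congrArg (· ^ (p - 1)) (hdep hxy)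
  rw [← sub_nonpos]
  induction n with
  | zero =>
    rw [replace_f le_rfl, mul_sum, ← sum_sub_distrib]
    refine sum_nonpos fun x _ => ?_
    have hx : 0 ≤ condMean (S 0) f x := condMean_nonneg _ hf x
    simpa [hY, Real.zero_rpow (zero_lt_one.trans hp).ne', Real.zero_rpow (sub_pos.2 hp).ne', hx]
      using max_rpow_sub_le hp le_rfl hx
  | succ n ih =>
    refine le_trans ?_ ih
    rw [replace_f le_rfl, replace_f n.le_succ, mul_sum, mul_sum, ← sum_sub_distrib,
      ← sum_sub_distrib]
    refine sum_le_sum fun x _ => ?_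
    simpa only [hY, partialSups_add_one, Pi.sup_apply, Nat.succ_eq_add_one] using
      max_rpow_sub_le hp (partialSups_condMean_nonneg S hf n x) (condMean_nonneg _ hf x)

theorem sum_partialSups_condMean_rpow_le (hS : Monotone S) (hf : 0 ≤ f) (hp : 1 < p) (n : ℕ) :
    ∑ x, partialSups (fun l => condMean (S l) f) n x ^ p ≤ (p / (p - 1)) ^ p * ∑ x, f x ^ p := by
  have hq : 0 ≤ p / (p - 1) := div_nonneg (by linarith) (by linarith)
  set Y := partialSups (fun l => condMean (S l) f) n
  have hmax : ∑ x, Y x ^ p ≤ p / (p - 1) * ∑ x, Y x ^ (p - 1) * f x :=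
    sum_partialSups_condMean_rpow_le_mul_sum hS hf hp n
  have young : p * (p / (p - 1) * ∑ x, Y x ^ (p - 1) * f x) ≤
      (p - 1) * ∑ x, Y x ^ p + (p / (p - 1)) ^ p * ∑ x, f x ^ p := by
    simp only [mul_sum, ← sum_add_distrib]
    refine sum_le_sum fun x _ => ?_
    rw [← Real.mul_rpow hq (hf x), mul_left_comm (p / (p - 1))]
    exact mul_rpow_sub_one_mul_le hp (partialSups_condMean_nonneg S hf n x)
      (mul_nonneg hq (hf x))
  linarith [mul_le_mul_of_nonneg_left hmax (zero_lt_one.trans hp).le]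

end CondMean

section PermMax

variable {n : ℕ}

/-- The image under `π` of the first `l` indices. -/
def initialSegment (π : Equiv.Perm (Fin n)) (l : ℕ) : Finset (Fin n) :=
  ({i | (i : ℕ) < l} : Finset (Fin n)).map π.toEmbedding

lemma monotone_initialSegment (π : Equiv.Perm (Fin n)) : Monotone (initialSegment π) :=
  fun _ _ hab => map_subset_map.2 <| monotone_filter_right _ fun _ _ hi => hi.trans_le hab

lemma initialSegment_mul (π τ : Equiv.Perm (Fin n)) (l : ℕ) :
    initialSegment (π * τ) l = (initialSegment τ l).map π.toEmbedding := by
  rw [initialSegment, initialSegment, map_map]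
  rfl

lemma exists_initialSegment_card_eq (S : Finset (Fin n)) :
    ∃ τ : Equiv.Perm (Fin n), initialSegment τ #S = S := by
  have hcard : #{i : Fin n | (i : ℕ) < #S} = #S := by
    rw [Fin.card_filter_val_lt, min_eq_right (card_finset_fin_le S)]
  let e : {i // i ∈ ({i | (i : ℕ) < #S} : Finset (Fin n))} ≃ {i // i ∈ S} :=
    equivOfCardEq hcard
  refine ⟨e.extendSubtype, eq_of_subset_of_card_le (fun j hj => ?_) ?_⟩
  · obtain ⟨i, hi, rfl⟩ := mem_map.1 hj
    exact e.extendSubtype_mem i hi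
  · rw [initialSegment, card_map, hcard]

variable {α : Type*} [Fintype α]

/-- The Doob maximal function along a chain of coordinate sets, averaged over all the orderings of
the coordinates. -/
def permMax (f : (Fin n → α) → ℝ) (x : Fin n → α) : ℝ :=
  𝔼 π : Equiv.Perm (Fin n), partialSups (fun l => condMean (initialSegment π l) f) n x

lemma permMax_nonneg {f : (Fin n → α) → ℝ} (hf : 0 ≤ f) : 0 ≤ permMax f :=
  fun x => expect_nonneg fun π _ => partialSups_condMean_nonneg (initialSegment π) hf n x

theorem sum_permMax_rpow_le {f : (Fin n → α) → ℝ} (hf : 0 ≤ f) {p : ℝ} (hp : 1 < p) :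
    ∑ x, permMax f x ^ p ≤ (p / (p - 1)) ^ p * ∑ x, f x ^ p := by
  set Y := fun π : Equiv.Perm (Fin n) => partialSups (fun l => condMean (initialSegment π l) f) n
  calc ∑ x, permMax f x ^ p ≤ ∑ x, 𝔼 π, Y π x ^ p := by
        refine sum_le_sum fun x _ => ?_
        simp only [permMax, expect, NNRat.smul_def, mul_sum]
        refine Real.rpow_arith_mean_le_arith_mean_rpow _ _ _ (fun _ _ => by positivity) ?_
          (fun π _ => partialSups_condMean_nonneg _ hf n x) hp.le
        simp [Nat.factorial_ne_zero, Fintype.card_perm]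
    _ = 𝔼 π, ∑ x, Y π x ^ p := (expect_sum_comm _ _ _).symm
    _ ≤ 𝔼 _π : Equiv.Perm (Fin n), (p / (p - 1)) ^ p * ∑ x, f x ^ p :=
        expect_le_expect fun π _ =>
          sum_partialSups_condMean_rpow_le (monotone_initialSegment π) hf hp n
    _ = (p / (p - 1)) ^ p * ∑ x, f x ^ p := Fintype.expect_const _

lemma expect_condMean_map_le_permMax (S : Finset (Fin n)) (f : (Fin n → α) → ℝ) (x : Fin n → α) :
    𝔼 π : Equiv.Perm (Fin n), condMean (S.map π.toEmbedding) f x ≤ permMax f x := by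
  obtain ⟨τ, hτ⟩ := exists_initialSegment_card_eq S
  have hshift : 𝔼 π : Equiv.Perm (Fin n), condMean (S.map π.toEmbedding) f x =
      𝔼 π, condMean (initialSegment π #S) f x := by
    refine Fintype.expect_equiv (Equiv.mulRight τ) _ _ fun π => ?_
    rw [Equiv.coe_mulRight, initialSegment_mul, hτ]
  rw [hshift]
  exact expect_le_expect fun π _ =>
    le_partialSups_of_le (fun l => condMean (initialSegment π l) f) (card_finset_fin_le S) x

theorem sum_binomial_mul_condMean_le_permMax {a b : ℝ} (ha : 0 ≤ a) (hb : 0 ≤ b) (hab : b + a = 1)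
    (f : (Fin n → α) → ℝ) (x : Fin n → α) :
    ∑ S : Finset (Fin n), b ^ #S * a ^ (n - #S) * condMean S f x ≤ permMax f x := by
  have hperm (π : Equiv.Perm (Fin n)) :
      ∑ S : Finset (Fin n), b ^ #S * a ^ (n - #S) * condMean S f x =
        ∑ S : Finset (Fin n), b ^ #S * a ^ (n - #S) * condMean (S.map π.toEmbedding) f x := by
    rw [← (Equiv.finsetCongr π).sum_comp]
    simp only [Equiv.finsetCongr_apply, card_map]
  have htotal : ∑ S : Finset (Fin n), b ^ #S * a ^ (n - #S) = 1 := by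
    simpa [hab] using Fintype.sum_pow_mul_eq_add_pow (Fin n) b a
  calc ∑ S : Finset (Fin n), b ^ #S * a ^ (n - #S) * condMean S f x
      = 𝔼 π : Equiv.Perm (Fin n), ∑ S : Finset (Fin n),
          b ^ #S * a ^ (n - #S) * condMean (S.map π.toEmbedding) f x := by
        rw [← expect_congr rfl fun π _ => hperm π, Fintype.expect_const]
    _ = ∑ S : Finset (Fin n), b ^ #S * a ^ (n - #S) *
          𝔼 π : Equiv.Perm (Fin n), condMean (S.map π.toEmbedding) f x := by
        simp only [expect_sum_comm, mul_expect]
    _ ≤ ∑ S : Finset (Fin n), b ^ #S * a ^ (n - #S) * permMax f x := by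
        gcongr
        exact expect_condMean_map_le_permMax _ f x
    _ = permMax f x := by rw [← sum_mul, htotal, one_mul]

end PermMax

/-! ### Convolution and product kernels -/

section Convolution

variable {G R : Type*} [Fintype G] [AddGroup G]

/-- Convolution of functions on a finite additive group, as a bilinear map. -/
def conv [CommSemiring R] : (G → R) →ₗ[R] (G → R) →ₗ[R] G → R :=
  LinearMap.mk₂ R (fun g f x => ∑ y, g y * f (x - y))
    (fun g₁ g₂ f => by ext x; simp only [Pi.add_apply, add_mul, sum_add_distrib])
    (fun c g f => by ext x; simp only [Pi.smul_apply, smul_eq_mul, mul_sum, mul_assoc])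
    (fun g f₁ f₂ => by ext x; simp only [Pi.add_apply, mul_add, sum_add_distrib])
    (fun c g f => by ext x; simp only [Pi.smul_apply, smul_eq_mul, mul_sum, mul_left_comm])

lemma conv_apply [CommSemiring R] (g f : G → R) (x : G) : conv g f x = ∑ y, g y * f (x - y) := rfl

lemma sum_conv [CommSemiring R] (g f : G → R) : ∑ x, conv g f x = (∑ x, g x) * ∑ x, f x := by
  simp only [conv_apply, sum_mul]
  rw [sum_comm]
  refine sum_congr rfl fun y _ => ?_
  rw [← mul_sum]
  exact congrArg (g y * ·) (Equiv.sum_comp (Equiv.subRight y) f)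

lemma conv_nonneg {g f : G → ℝ} (hg : 0 ≤ g) (hf : 0 ≤ f) : 0 ≤ conv g f :=
  fun _ => sum_nonneg fun y _ => mul_nonneg (hg y) (hf _)

lemma norm_conv_le [NormedCommRing R] (g f : G → R) (x : G) :
    ‖conv g f x‖ ≤ conv (fun y => ‖g y‖) (fun y => ‖f y‖) x :=
  norm_sum_le_of_le _ fun _ _ => norm_mul_le _ _

lemma sum_norm_conv_le [NormedCommRing R] (g f : G → R) :
    ∑ x, ‖conv g f x‖ ≤ (∑ x, ‖g x‖) * ∑ x, ‖f x‖ :=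
  (sum_le_sum fun x _ => norm_conv_le g f x).trans_eq (sum_conv _ _)

theorem sum_conv_rpow_le {k g : G → ℝ} (hk : 0 ≤ k) (hk1 : ∑ x, k x = 1) (hg : 0 ≤ g) {p : ℝ}
    (hp : 1 ≤ p) : ∑ x, conv k g x ^ p ≤ ∑ x, g x ^ p :=
  calc ∑ x, conv k g x ^ p ≤ ∑ x, conv k (fun y => g y ^ p) x :=
        sum_le_sum fun x _ => Real.rpow_arith_mean_le_arith_mean_rpow _ _ _ (fun y _ => hk y) hk1
          (fun _ _ => hg _) hp
    _ = ∑ x, g x ^ p := by rw [sum_conv, hk1, one_mul]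

end Convolution

section ProdKernel

variable {ι α : Type*} [Fintype ι]

/-- The product kernel `y ↦ ∏ i, v (y i)` with the same factor `v` in every coordinate. -/
def prodKernel (v : α → ℝ) (y : ι → α) : ℝ := ∏ i, v (y i)

lemma prodKernel_nonneg {v : α → ℝ} (hv : 0 ≤ v) : 0 ≤ prodKernel (ι := ι) v :=
  fun _ => prod_nonneg fun _ _ => hv _

variable [DecidableEq ι] [Fintype α]

lemma sum_prodKernel {v : α → ℝ} (hv : ∑ z, v z = 1) : ∑ y : ι → α, prodKernel v y = 1 := by
  simpa [hv, prodKernel] using sum_prod_piFinset univ fun (_ : ι) z => v z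

lemma expect_prod_apply (g : ι → α → ℝ) : 𝔼 y : ι → α, ∏ i, g i (y i) = ∏ i, 𝔼 z, g i z := by
  simp only [Fintype.expect_eq_sum_div_card, prod_div_distrib, prod_const, card_univ,
    Fintype.card_fun, Nat.cast_pow]
  simpa using congrArg (· / _) (sum_prod_piFinset univ g)

lemma condMean_prodKernel {v : α → ℝ} (hv : ∑ z, v z = 1) (S : Finset ι) (y : ι → α) :
    condMean S (prodKernel v) y = ∏ i, if i ∈ S then v (y i) else (Fintype.card α : ℝ)⁻¹ := by
  have : Nonempty α := by by_contra h; simp [not_nonempty_iff.1 h] at hv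
  refine (expect_prod_apply fun i z => v (if i ∈ S then y i else z)).trans ?_
  refine prod_congr rfl fun i _ => ?_
  split_ifs
  · exact Fintype.expect_const _
  · rw [Fintype.expect_eq_sum_div_card, hv, one_div]

lemma condMean_comp_sub [AddGroup α] (S : Finset ι) (f : (ι → α) → ℝ) (x y : ι → α) :
    condMean S f (x - y) = condMean S (fun z => f (x - z)) y := by
  refine Fintype.expect_equiv (Equiv.subLeft x).symm _ _ fun z => congrArg f ?_
  ext i
  by_cases hi : i ∈ S <;> simp [hi]

lemma conv_prodKernel_condMean [AddGroup α] {v : α → ℝ} (hv : ∑ z, v z = 1) (S : Finset ι)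
    (f : (ι → α) → ℝ) :
    conv (prodKernel v) (condMean S f) =
      conv (fun y => ∏ i, if i ∈ S then v (y i) else (Fintype.card α : ℝ)⁻¹) f := by
  ext x
  set F : (ι → α) → ℝ := fun y => f (x - y)
  calc conv (prodKernel v) (condMean S f) x = ∑ y, condMean S F y * prodKernel v y := by
        simp only [conv_apply, condMean_comp_sub, mul_comm, F]
    _ = ∑ y, condMean S F y * condMean S (prodKernel v) y :=
        (sum_mul_condMean (dependsOn_condMean S F) _).symm
    _ = ∑ y, condMean S (prodKernel v) y * F y := by
        rw [← sum_mul_condMean (dependsOn_condMean S (prodKernel v)) F]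
        exact sum_congr rfl fun y _ => mul_comm _ _
    _ = _ := by simp only [condMean_prodKernel hv, conv_apply, F]

end ProdKernel

section Mixture

variable {n : ℕ} {α : Type*} [Fintype α] [AddGroup α]

/-- A mixture of `v` with the uniform weight keeps a random set of coordinates and averages over
the others, so its product kernel is a binomial average of conditional means. -/
theorem conv_prodKernel_le_conv_permMax {v w : α → ℝ} (hv : 0 ≤ v) (hv1 : ∑ z, v z = 1)
    {a b : ℝ} (ha : 0 ≤ a) (hb : 0 ≤ b) (hab : b + a = 1)
    (hvw : ∀ z, w z = b * v z + a * (Fintype.card α : ℝ)⁻¹) (f : (Fin n → α) → ℝ) :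
    conv (prodKernel w) f ≤ conv (prodKernel v) (permMax f) := by
  have expand : prodKernel w = ∑ S : Finset (Fin n), (b ^ #S * a ^ (n - #S)) •
      fun y => ∏ i, if i ∈ S then v (y i) else (Fintype.card α : ℝ)⁻¹ := by
    ext y
    simp only [prodKernel, hvw, prod_add, powerset_univ, Finset.sum_apply, Pi.smul_apply,
      smul_eq_mul, prod_ite, prod_mul_distrib, prod_const]
    refine sum_congr rfl fun S _ => ?_
    have hS : ({i | i ∈ S} : Finset (Fin n)) = S := by ext; simp
    have hSc : ({i | i ∉ S} : Finset (Fin n)) = univ \ S := by ext; simp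
    rw [hS, hSc, card_univ_sdiff, Fintype.card_fin]
    ring
  have mean (x : Fin n → α) : conv (prodKernel w) f x = conv (prodKernel v)
      (fun y => ∑ S : Finset (Fin n), b ^ #S * a ^ (n - #S) * condMean S f y) x := by
    have hfun : (fun y => ∑ S : Finset (Fin n), b ^ #S * a ^ (n - #S) * condMean S f y) =
        ∑ S : Finset (Fin n), (b ^ #S * a ^ (n - #S)) • condMean S f := by
      ext y; simp
    rw [expand, hfun]
    simp only [map_sum, map_smul, LinearMap.sum_apply, LinearMap.smul_apply,
      conv_prodKernel_condMean hv1]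
  intro x
  rw [mean]
  refine sum_le_sum fun y _ => mul_le_mul_of_nonneg_left ?_ (prodKernel_nonneg hv y)
  exact sum_binomial_mul_condMean_le_permMax ha hb hab f _

end Mixture

section ZeroBiased

variable {m N : ℕ} {s : ℝ}

/-- The weight on `ℤ/(m+1)` giving mass `s` to `0` and sharing the rest equally. -/
def zeroBiased (m : ℕ) (s : ℝ) (z : ZMod (m + 1)) : ℝ := if z = 0 then s else (1 - s) / m

lemma zeroBiased_nonneg (hs₀ : 0 ≤ s) (hs₁ : s ≤ 1) : 0 ≤ zeroBiased m s := by
  intro z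
  have : 0 ≤ 1 - s := sub_nonneg.2 hs₁
  simp only [zeroBiased, Pi.zero_apply]
  split_ifs <;> positivity

lemma sum_zeroBiased (hm : m ≠ 0) (s : ℝ) : ∑ z, zeroBiased m s z = 1 := by
  have hm' : (m : ℝ) ≠ 0 := Nat.cast_ne_zero.2 hm
  have hcard : #{z : ZMod (m + 1) | z ≠ 0} = m := by simp [filter_ne', ZMod.card]
  simp only [zeroBiased, sum_ite, sum_const, nsmul_eq_mul, hcard, filter_eq', mem_univ, if_true,
    card_singleton, Nat.cast_one]
  field_simp
  ring

/-- The majorant of all the averages against product kernels of `zeroBiased` weights: such a weight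
is a mixture of the uniform one with one of the two extremes `zeroBiased m 0`, `zeroBiased m 1`. -/
def extremeMajorant (f : (Fin N → ZMod (m + 1)) → ℝ) : (Fin N → ZMod (m + 1)) → ℝ :=
  conv (prodKernel (zeroBiased m 0)) (permMax f) + conv (prodKernel (zeroBiased m 1)) (permMax f)

lemma conv_extreme_nonneg {f : (Fin N → ZMod (m + 1)) → ℝ} (hf : 0 ≤ f) (hs₀ : 0 ≤ s)
    (hs₁ : s ≤ 1) : 0 ≤ conv (prodKernel (zeroBiased m s)) (permMax f) :=
  conv_nonneg (prodKernel_nonneg (zeroBiased_nonneg hs₀ hs₁)) (permMax_nonneg hf)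

lemma extremeMajorant_nonneg {f : (Fin N → ZMod (m + 1)) → ℝ} (hf : 0 ≤ f) :
    0 ≤ extremeMajorant f :=
  add_nonneg (conv_extreme_nonneg hf le_rfl zero_le_one) (conv_extreme_nonneg hf zero_le_one le_rfl)

theorem conv_zeroBiased_le_extremeMajorant (hm : m ≠ 0) {f : (Fin N → ZMod (m + 1)) → ℝ}
    (hf : 0 ≤ f) (hs₀ : 0 ≤ s) (hs₁ : s ≤ 1) :
    conv (prodKernel (zeroBiased m s)) f ≤ extremeMajorant f := by
  have hm' : (0 : ℝ) < m := Nat.cast_pos.2 (Nat.pos_of_ne_zero hm)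
  have hcard : (Fintype.card (ZMod (m + 1)) : ℝ) = m + 1 := by simp [ZMod.card]
  rcases le_or_gt ((m + 1) * s) 1 with h | h
  · refine le_add_of_le_of_nonneg ?_ (conv_extreme_nonneg hf zero_le_one le_rfl)
    refine conv_prodKernel_le_conv_permMax (zeroBiased_nonneg le_rfl zero_le_one)
      (sum_zeroBiased hm 0) (a := (m + 1) * s) (b := 1 - (m + 1) * s) (by positivity)
      (by linarith) (by ring) (fun z => ?_) f
    rw [hcard]
    unfold zeroBiased
    split_ifs <;> field_simp <;> ring
  · refine le_add_of_nonneg_of_le (conv_extreme_nonneg hf le_rfl zero_le_one) ?_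
    refine conv_prodKernel_le_conv_permMax (zeroBiased_nonneg zero_le_one le_rfl)
      (sum_zeroBiased hm 1) (a := (m + 1) * (1 - s) / m) (b := ((m + 1) * s - 1) / m)
      (div_nonneg (mul_nonneg (by positivity) (by linarith)) hm'.le)
      (div_nonneg (by linarith) hm'.le) (by field_simp; ring) (fun z => ?_) f
    rw [hcard]
    unfold zeroBiased
    split_ifs <;> field_simp <;> ring

lemma add_rpow_le_two_rpow_mul {a b p : ℝ} (ha : 0 ≤ a) (hb : 0 ≤ b) (hp : 1 ≤ p) :
    (a + b) ^ p ≤ 2 ^ (p - 1) * (a ^ p + b ^ p) := by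
  lift a to NNReal using ha
  lift b to NNReal using hb
  exact_mod_cast NNReal.rpow_add_le_mul_rpow_add_rpow a b hp

lemma sum_conv_extreme_rpow_le (hm : m ≠ 0) {f : (Fin N → ZMod (m + 1)) → ℝ} (hf : 0 ≤ f)
    (hs₀ : 0 ≤ s) (hs₁ : s ≤ 1) {p : ℝ} (hp : 1 < p) :
    ∑ x, conv (prodKernel (zeroBiased m s)) (permMax f) x ^ p ≤
      (p / (p - 1)) ^ p * ∑ x, f x ^ p :=
  (sum_conv_rpow_le (prodKernel_nonneg (zeroBiased_nonneg hs₀ hs₁))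
    (sum_prodKernel (sum_zeroBiased hm s)) (permMax_nonneg hf) hp.le).trans
    (sum_permMax_rpow_le hf hp)

theorem sum_extremeMajorant_rpow_le (hm : m ≠ 0) {f : (Fin N → ZMod (m + 1)) → ℝ} (hf : 0 ≤ f)
    {p : ℝ} (hp : 1 < p) :
    ∑ x, extremeMajorant f x ^ p ≤ (2 * (p / (p - 1))) ^ p * ∑ x, f x ^ p := by
  have hq : 0 ≤ p / (p - 1) := div_nonneg (by linarith) (by linarith)
  have h₀ := sum_conv_extreme_rpow_le hm hf le_rfl zero_le_one hp
  have h₁ := sum_conv_extreme_rpow_le hm hf zero_le_one le_rfl hp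
  calc ∑ x, extremeMajorant f x ^ p
      ≤ ∑ x, 2 ^ (p - 1) * (conv (prodKernel (zeroBiased m 0)) (permMax f) x ^ p +
          conv (prodKernel (zeroBiased m 1)) (permMax f) x ^ p) :=
        sum_le_sum fun x _ => add_rpow_le_two_rpow_mul
          (conv_extreme_nonneg hf le_rfl zero_le_one x)
          (conv_extreme_nonneg hf zero_le_one le_rfl x) hp.le
    _ ≤ 2 ^ (p - 1) * ((p / (p - 1)) ^ p * ∑ x, f x ^ p + (p / (p - 1)) ^ p * ∑ x, f x ^ p) := by
        rw [← mul_sum, sum_add_distrib]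
        gcongr
    _ = (2 * (p / (p - 1))) ^ p * ∑ x, f x ^ p := by
        rw [Real.mul_rpow zero_le_two hq, ← rpow_sub_one_mul_self zero_le_two hp]
        ring

end ZeroBiased

/-! ### Interpolation between `L¹` and `L²` -/

section Interpolation

open Complex ComplexConjugate

/-- The phase of `c` times `‖c‖ ^ w`, analytic in `w`. It is `0` for `c = 0`, whatever `w` is. -/
def phasePow (c w : ℂ) : ℂ := c / ‖c‖ * (‖c‖ : ℂ) ^ w

lemma norm_phasePow_le (c w : ℂ) : ‖phasePow c w‖ ≤ ‖c‖ ^ w.re := by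
  rcases eq_or_ne c 0 with rfl | hc
  · simpa [phasePow] using Real.zero_rpow_nonneg w.re
  · have hc' : 0 < ‖c‖ := norm_pos_iff.2 hc
    simp [phasePow, norm_cpow_eq_rpow_re_of_pos hc', hc]

lemma norm_phasePow_le_of_re_mem {c w : ℂ} {p : ℝ} (hw : w.re ∈ Set.Icc 0 p) :
    ‖phasePow c w‖ ≤ (1 + ‖c‖) ^ p :=
  calc ‖phasePow c w‖ ≤ ‖c‖ ^ w.re := norm_phasePow_le c w
    _ ≤ (1 + ‖c‖) ^ w.re := Real.rpow_le_rpow (norm_nonneg c) (by linarith) hw.1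
    _ ≤ (1 + ‖c‖) ^ p := Real.rpow_le_rpow_of_exponent_le (by linarith [norm_nonneg c]) hw.2

lemma norm_phasePow_sq_le {c w : ℂ} {p : ℝ} (hw : w.re = p / 2) : ‖phasePow c w‖ ^ 2 ≤ ‖c‖ ^ p :=
  calc ‖phasePow c w‖ ^ 2 ≤ (‖c‖ ^ (p / 2)) ^ 2 := by
        gcongr
        exact hw ▸ norm_phasePow_le c w
    _ = ‖c‖ ^ p := by
        rw [← Real.rpow_mul_natCast (norm_nonneg c), Nat.cast_ofNat, div_mul_cancel₀ _ two_ne_zero]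

lemma phasePow_one (c : ℂ) : phasePow c 1 = c := by
  rcases eq_or_ne c 0 with rfl | hc
  · simp [phasePow]
  · rw [phasePow, cpow_one, div_mul_cancel₀ _ (by simpa using hc)]

lemma phasePow_conj_mul (c : ℂ) {p : ℝ} (hp : p ≠ 0) :
    phasePow (conj c) ((p - 1 : ℝ) : ℂ) * c = ((‖c‖ ^ p : ℝ) : ℂ) := by
  rcases eq_or_ne c 0 with rfl | hc
  · simp [phasePow, Real.zero_rpow hp]
  · have hc' : (‖c‖ : ℂ) ≠ 0 := by simpa using hc
    have hcc : conj c * c = (‖c‖ : ℂ) * ‖c‖ := by rw [mul_comm, mul_conj']; ring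
    rw [phasePow, RCLike.norm_conj, ← ofReal_cpow (norm_nonneg c),
      Real.rpow_sub_one (norm_ne_zero_iff.2 hc)]
    push_cast
    field_simp
    linear_combination ((‖c‖ ^ p : ℝ) : ℂ) * hcc

lemma differentiable_phasePow (c : ℂ) : Differentiable ℂ (phasePow c) := by
  rcases eq_or_ne c 0 with rfl | hc
  · have phasePow_zero : phasePow 0 = fun _ => 0 := by ext w; simp [phasePow]
    exact phasePow_zero ▸ differentiable_const (0 : ℂ)
  · have hc' : (‖c‖ : ℂ) ≠ 0 := by simpa using hc
    unfold phasePow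
    exact (differentiable_id.const_cpow (Or.inl hc')).const_mul _

lemma re_mul_div_two (p : ℝ) (z : ℂ) : ((p : ℂ) * z / 2).re = p * z.re / 2 := by simp

lemma re_mul_one_sub_div_two (p : ℝ) (z : ℂ) : ((p : ℂ) * (1 - z / 2)).re = p * (1 - z.re / 2) := by
  simp

variable {ι κ : Type*} [Fintype κ] (D : (ι → ℂ) →ₗ[ℂ] κ → ℂ) (p : ℝ) (f : ι → ℂ)

/-- The analytic family of Thorin's proof: at `z = 2 - 2 / p` it equals `∑ x, ‖D f x‖ ^ p`, while
its size is governed by the `L¹` bound of `D` on `re z = 0` and by the `L²` bound on `re z = 1`. -/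
def thorinFamily (z : ℂ) : ℂ :=
  ∑ x, phasePow (conj (D f x)) (p * z / 2) * D (fun y => phasePow (f y) (p * (1 - z / 2))) x

lemma norm_thorinFamily_le (z : ℂ) :
    ‖thorinFamily D p f z‖ ≤ ∑ x, ‖phasePow (conj (D f x)) (p * z / 2)‖ *
      ‖D (fun y => phasePow (f y) (p * (1 - z / 2))) x‖ :=
  norm_sum_le_of_le _ fun _ _ => (norm_mul _ _).le

lemma thorinFamily_two_sub {p : ℝ} (hp : p ≠ 0) :
    thorinFamily D p f ((2 - 2 / p : ℝ) : ℂ) = ((∑ x, ‖D f x‖ ^ p : ℝ) : ℂ) := by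
  have hdual : (p : ℂ) * ((2 - 2 / p : ℝ) : ℂ) / 2 = ((p - 1 : ℝ) : ℂ) := by
    norm_cast
    field_simp
  have hinput : (p : ℂ) * (1 - ((2 - 2 / p : ℝ) : ℂ) / 2) = 1 := by
    norm_cast
    field_simp
    ring
  simp only [thorinFamily, hdual, hinput, phasePow_one, phasePow_conj_mul _ hp, ofReal_sum]

lemma differentiable_thorinFamily [Finite ι] : Differentiable ℂ (thorinFamily D p f) := by
  have := Fintype.ofFinite ι
  have hinput : Differentiable ℂ fun (z : ℂ) (y : ι) => phasePow (f y) (p * (1 - z / 2)) :=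
    differentiable_pi.2 fun y => (differentiable_phasePow (f y)).comp (by fun_prop)
  have houtput := D.toContinuousLinearMap.differentiable.comp hinput
  refine Differentiable.fun_sum fun x _ => Differentiable.fun_mul ?_ ?_
  · exact (differentiable_phasePow _).comp (by fun_prop)
  · exact differentiable_pi.1 houtput x

variable [Fintype ι] {D p} {A ε : ℝ}

lemma bddAbove_thorinFamily (hA : 0 ≤ A) (hD : ∀ g, ∑ x, ‖D g x‖ ≤ A * ∑ y, ‖g y‖) (hp : 0 ≤ p) :
    BddAbove ((norm ∘ thorinFamily D p f) '' HadamardThreeLines.verticalClosedStrip 0 1) := by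
  refine ⟨(∑ x, (1 + ‖D f x‖) ^ p) * (A * ∑ y, (1 + ‖f y‖) ^ p), ?_⟩
  rintro _ ⟨z, ⟨hz₀, hz₁⟩, rfl⟩
  have hdual (x : κ) : ‖phasePow (conj (D f x)) (p * z / 2)‖ ≤ ∑ x, (1 + ‖D f x‖) ^ p :=
    calc ‖phasePow (conj (D f x)) (p * z / 2)‖ ≤ (1 + ‖conj (D f x)‖) ^ p :=
          norm_phasePow_le_of_re_mem (by rw [re_mul_div_two]; constructor <;> nlinarith)
      _ = (1 + ‖D f x‖) ^ p := by rw [RCLike.norm_conj]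
      _ ≤ ∑ x, (1 + ‖D f x‖) ^ p :=
          single_le_sum (f := fun x => (1 + ‖D f x‖) ^ p) (fun _ _ => by positivity) (mem_univ x)
  refine (norm_thorinFamily_le D p f z).trans ?_
  refine (sum_le_sum fun x _ => mul_le_mul_of_nonneg_right (hdual x) (norm_nonneg _)).trans ?_
  rw [← mul_sum]
  gcongr
  refine (hD _).trans ?_
  gcongr with y
  exact norm_phasePow_le_of_re_mem (by rw [re_mul_one_sub_div_two]; constructor <;> nlinarith)

lemma norm_thorinFamily_le_of_re_eq_zero (hA : 0 ≤ A)
    (hD : ∀ g, ∑ x, ‖D g x‖ ≤ A * ∑ y, ‖g y‖) {z : ℂ} (hz : z.re = 0) :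
    ‖thorinFamily D p f z‖ ≤ A * ∑ y, ‖f y‖ ^ p := by
  have hdual (x : κ) : ‖phasePow (conj (D f x)) (p * z / 2)‖ ≤ 1 := by
    simpa [re_mul_div_two, hz] using norm_phasePow_le (conj (D f x)) (p * z / 2)
  have hinput (y : ι) : ‖phasePow (f y) (p * (1 - z / 2))‖ ≤ ‖f y‖ ^ p := by
    simpa [re_mul_one_sub_div_two, hz] using norm_phasePow_le (f y) (p * (1 - z / 2))
  refine (norm_thorinFamily_le D p f z).trans ?_
  refine (sum_le_sum fun x _ => mul_le_of_le_one_left (norm_nonneg _) (hdual x)).trans ?_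
  refine (hD _).trans ?_
  gcongr with y
  exact hinput y

lemma norm_thorinFamily_le_of_re_eq_one (hε : 0 ≤ ε)
    (hD : ∀ g, ∑ x, ‖D g x‖ ^ 2 ≤ ε ^ 2 * ∑ y, ‖g y‖ ^ 2) {z : ℂ} (hz : z.re = 1) :
    ‖thorinFamily D p f z‖ ≤ ε * (√(∑ y, ‖f y‖ ^ p) * √(∑ x, ‖D f x‖ ^ p)) := by
  set u : κ → ℂ := fun x => phasePow (conj (D f x)) (p * z / 2)
  set g : ι → ℂ := fun y => phasePow (f y) (p * (1 - z / 2))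
  have hu : ∑ x, ‖u x‖ ^ 2 ≤ ∑ x, ‖D f x‖ ^ p := by
    refine sum_le_sum fun x _ => ?_
    rw [← RCLike.norm_conj (D f x)]
    exact norm_phasePow_sq_le (by rw [re_mul_div_two, hz, mul_one])
  have hg : ∑ y, ‖g y‖ ^ 2 ≤ ∑ y, ‖f y‖ ^ p :=
    sum_le_sum fun y _ => norm_phasePow_sq_le (by rw [re_mul_one_sub_div_two, hz]; ring)
  calc ‖thorinFamily D p f z‖ ≤ ∑ x, ‖u x‖ * ‖D g x‖ := norm_thorinFamily_le D p f z
    _ ≤ √(∑ x, ‖u x‖ ^ 2) * √(∑ x, ‖D g x‖ ^ 2) := Real.sum_mul_le_sqrt_mul_sqrt _ _ _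
    _ ≤ √(∑ x, ‖D f x‖ ^ p) * √(ε ^ 2 * ∑ y, ‖f y‖ ^ p) := by
        gcongr
        exact (hD g).trans (by gcongr)
    _ = ε * (√(∑ y, ‖f y‖ ^ p) * √(∑ x, ‖D f x‖ ^ p)) := by
        rw [Real.sqrt_mul (sq_nonneg ε), Real.sqrt_sq hε]
        ring

lemma le_rpow_mul_of_le_interp {H Φ : ℝ} (hA : 0 ≤ A) (hε : 0 ≤ ε) (hH : 0 ≤ H) (hΦ : 0 ≤ Φ)
    (hp : 1 < p) (hp2 : p ≤ 2)
    (h : H ≤ (A * Φ) ^ (1 - (2 - 2 / p)) * (ε * (√Φ * √H)) ^ (2 - 2 / p)) :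
    H ≤ (A ^ (2 / p - 1) * ε ^ (2 - 2 / p)) ^ p * Φ := by
  have hp0 : 0 < p := zero_lt_one.trans hp
  have hθ : 0 ≤ 2 / p - 1 := sub_nonneg.2 ((one_le_div hp0).2 hp2)
  have hinv : 0 ≤ 1 - 1 / p := sub_nonneg.2 ((div_le_one hp0).2 hp.le)
  set K := A ^ (2 / p - 1) * ε ^ (2 - 2 / p) with hK
  have hK0 : 0 ≤ K := by positivity
  rcases hH.eq_or_lt with hH0 | hHpos
  · rw [← hH0]
    positivity
  have hsplit : (A * Φ) ^ (1 - (2 - 2 / p)) * (ε * (√Φ * √H)) ^ (2 - 2 / p) =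
      K * Φ ^ (1 / p) * H ^ (1 - 1 / p) := by
    have hΦsplit : Φ ^ (1 / p) = Φ ^ (2 / p - 1) * Φ ^ (1 - 1 / p) := by
      rw [← Real.rpow_add_of_nonneg hΦ hθ hinv]
      ring_nf
    rw [Real.sqrt_eq_rpow, Real.sqrt_eq_rpow, Real.mul_rpow hA hΦ, Real.mul_rpow hε (by positivity),
      Real.mul_rpow (by positivity) (by positivity), ← Real.rpow_mul hΦ, ← Real.rpow_mul hH,
      hΦsplit, hK]
    ring_nf
  have hroot : H ^ (1 / p) ≤ K * Φ ^ (1 / p) := by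
    refine le_of_mul_le_mul_right ?_ (Real.rpow_pos_of_pos hHpos (1 - 1 / p))
    rwa [← Real.rpow_add hHpos, add_sub_cancel, Real.rpow_one, ← hsplit]
  calc H = (H ^ (1 / p)) ^ p := by
        rw [← Real.rpow_mul hH, one_div_mul_cancel hp0.ne', Real.rpow_one]
    _ ≤ (K * Φ ^ (1 / p)) ^ p := by gcongr
    _ = K ^ p * Φ := by
        rw [Real.mul_rpow hK0 (by positivity), ← Real.rpow_mul hΦ, one_div_mul_cancel hp0.ne',
          Real.rpow_one]

theorem sum_norm_rpow_le_of_L1_of_L2 (hA : 0 ≤ A) (hε : 0 ≤ ε)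
    (hD₁ : ∀ g, ∑ x, ‖D g x‖ ≤ A * ∑ y, ‖g y‖)
    (hD₂ : ∀ g, ∑ x, ‖D g x‖ ^ 2 ≤ ε ^ 2 * ∑ y, ‖g y‖ ^ 2) (hp : 1 < p) (hp2 : p ≤ 2) :
    ∑ x, ‖D f x‖ ^ p ≤ (A ^ (2 / p - 1) * ε ^ (2 - 2 / p)) ^ p * ∑ y, ‖f y‖ ^ p := by
  have hp0 : 0 < p := zero_lt_one.trans hp
  have hθ : 2 / p ∈ Set.Icc 1 2 := ⟨(one_le_div hp0).2 hp2, (div_le_iff₀ hp0).2 (by linarith)⟩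
  have hH : 0 ≤ ∑ x, ‖D f x‖ ^ p := sum_nonneg fun _ _ => by positivity
  have hstrip : ((2 - 2 / p : ℝ) : ℂ) ∈ HadamardThreeLines.verticalClosedStrip 0 1 := by
    rw [HadamardThreeLines.verticalClosedStrip, Set.mem_preimage, ofReal_re]
    constructor <;> linarith [hθ.1, hθ.2]
  have threeLines := HadamardThreeLines.norm_le_interp_of_mem_verticalClosedStrip₀₁'
    (thorinFamily D p f) hstrip (differentiable_thorinFamily D p f).diffContOnCl
    (bddAbove_thorinFamily f hA hD₁ hp0.le)
    (fun _ => norm_thorinFamily_le_of_re_eq_zero f hA hD₁)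
    (fun _ => norm_thorinFamily_le_of_re_eq_one f hε hD₂)
  rw [thorinFamily_two_sub D f hp0.ne', norm_real, Real.norm_of_nonneg hH, ofReal_re] at threeLines
  exact le_rpow_mul_of_le_interp hA hε hH (sum_nonneg fun _ _ => by positivity) hp hp2 threeLines

end Interpolation

/-! ### Fourier analysis on finite abelian groups -/

section Fourier

open ComplexConjugate

variable {G : Type*} [AddCommGroup G] [Fintype G]

/-- The Fourier coefficient of a function at the character `ψ`. The group carries the counting
measure and the kernel is `ψ`, not its conjugate. -/
def charCoeff (ψ : AddChar G ℂ) : (G → ℂ) →ₗ[ℂ] ℂ := Fintype.linearCombination ℂ ψ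

lemma charCoeff_apply (ψ : AddChar G ℂ) (f : G → ℂ) : charCoeff ψ f = ∑ x, f x * ψ x := rfl

lemma charCoeff_conv (ψ : AddChar G ℂ) (g f : G → ℂ) :
    charCoeff ψ (conv g f) = charCoeff ψ g * charCoeff ψ f := by
  simp only [charCoeff_apply, conv_apply, sum_mul]
  rw [sum_comm]
  refine sum_congr rfl fun y _ => ?_
  rw [← Equiv.sum_comp (Equiv.addRight y), mul_sum]
  refine sum_congr rfl fun x _ => ?_
  rw [Equiv.coe_addRight, add_sub_cancel_right, AddChar.map_add_eq_mul]
  ring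

theorem sum_norm_charCoeff_sq (f : G → ℂ) :
    ∑ ψ, ‖charCoeff ψ f‖ ^ 2 = Fintype.card G * ∑ x, ‖f x‖ ^ 2 := by
  classical
  have expand (ψ : AddChar G ℂ) : ((‖charCoeff ψ f‖ ^ 2 : ℝ) : ℂ) =
      ∑ x, ∑ y, f x * conj (f y) * ψ (x - y) := by
    rw [Complex.ofReal_pow, ← Complex.mul_conj', charCoeff_apply, map_sum, sum_mul_sum]
    refine sum_congr rfl fun x _ => sum_congr rfl fun y _ => ?_
    rw [map_mul, sub_eq_add_neg, AddChar.map_add_eq_mul, AddChar.map_neg_eq_conj]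
    ring
  have orthogonality (x : G) : ∑ y, ∑ ψ : AddChar G ℂ, f x * conj (f y) * ψ (x - y) =
      Fintype.card G * ((‖f x‖ ^ 2 : ℝ) : ℂ) := by
    simp only [← mul_sum, AddChar.sum_apply_eq_ite, sub_eq_zero, mul_ite, mul_zero]
    rw [sum_ite_eq, if_pos (mem_univ x), Complex.mul_conj', Complex.ofReal_pow, mul_comm]
  refine Complex.ofReal_injective ?_
  rw [Complex.ofReal_sum, sum_congr rfl fun ψ _ => expand ψ, sum_comm, Complex.ofReal_mul,
    Complex.ofReal_natCast, Complex.ofReal_sum, mul_sum]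
  refine sum_congr rfl fun x _ => ?_
  rw [sum_comm, orthogonality]

lemma sum_norm_conv_sq_le {g : G → ℂ} {ε : ℝ} (hg : ∀ ψ, ‖charCoeff ψ g‖ ≤ ε) (f : G → ℂ) :
    ∑ x, ‖conv g f x‖ ^ 2 ≤ ε ^ 2 * ∑ x, ‖f x‖ ^ 2 := by
  refine le_of_mul_le_mul_left ?_ (Nat.cast_pos.2 (Fintype.card_pos : 0 < Fintype.card G))
  rw [← sum_norm_charCoeff_sq, mul_left_comm, ← sum_norm_charCoeff_sq, mul_sum]
  refine sum_le_sum fun ψ _ => ?_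
  rw [charCoeff_conv, norm_mul, mul_pow]
  gcongr
  exact hg ψ

theorem sum_norm_conv_rpow_le {g : G → ℂ} {A ε p : ℝ} (hgA : ∑ x, ‖g x‖ ≤ A)
    (hgε : ∀ ψ, ‖charCoeff ψ g‖ ≤ ε) (f : G → ℂ) (hp : 1 < p) (hp2 : p ≤ 2) :
    ∑ x, ‖conv g f x‖ ^ p ≤ (A ^ (2 / p - 1) * ε ^ (2 - 2 / p)) ^ p * ∑ x, ‖f x‖ ^ p :=
  sum_norm_rpow_le_of_L1_of_L2 (D := conv g) f ((sum_nonneg fun _ _ => norm_nonneg _).trans hgA)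
    ((norm_nonneg _).trans (hgε 0))
    (fun h => (sum_norm_conv_le g h).trans (by gcongr)) (sum_norm_conv_sq_le hgε) hp hp2

end Fourier

/-! ### The Bernstein operator -/

section Bernstein

variable {E F : Type*} [AddCommGroup E] [Module ℝ E] [AddCommGroup F] [Module ℝ F]

lemma div_mem_unitInterval {k N : ℕ} (hk : k ≤ N) : (k : ℝ) / N ∈ Set.Icc 0 1 :=
  ⟨by positivity, div_le_one_of_le₀ (Nat.cast_le.2 hk) N.cast_nonneg⟩

/-- The probability, under the binomial law with `N` trials and success rate `k / N`, of exactly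
`l` successes. -/
def bernsteinWeight (N k l : ℕ) : ℝ := (bernsteinPolynomial ℝ N l).eval ((k : ℝ) / N)

lemma bernsteinWeight_eq (N k l : ℕ) :
    bernsteinWeight N k l = N.choose l * ((k : ℝ) / N) ^ l * (1 - (k : ℝ) / N) ^ (N - l) := by
  simp [bernsteinWeight, bernsteinPolynomial]

lemma bernsteinWeight_nonneg {N k : ℕ} (hk : k ≤ N) (l : ℕ) : 0 ≤ bernsteinWeight N k l := by
  obtain ⟨-, h₁⟩ := div_mem_unitInterval hk
  have := sub_nonneg.2 h₁
  rw [bernsteinWeight_eq]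
  positivity

lemma sum_bernsteinWeight (N k : ℕ) : ∑ l ∈ range (N + 1), bernsteinWeight N k l = 1 := by
  simp only [bernsteinWeight, ← Polynomial.eval_finsetSum, bernsteinPolynomial.sum,
    Polynomial.eval_one]

/-- The operator taking a sequence `v` to the sequence of its binomial means: entry `k` of the image
averages `v` over the binomial law with `N` trials and success rate `k / N`. Only the entries up to
`N` are meaningful. -/
def bernsteinOp (N : ℕ) : Module.End ℝ (ℕ → E) where
  toFun v k := ∑ l ∈ range (N + 1), bernsteinWeight N k l • v l
  map_add' v w := by ext k; simp only [Pi.add_apply, smul_add, sum_add_distrib]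
  map_smul' c v := by
    ext k
    simp only [Pi.smul_apply, RingHom.id_apply, smul_sum, smul_comm c]

lemma bernsteinOp_apply (N : ℕ) (v : ℕ → E) (k : ℕ) :
    bernsteinOp N v k = ∑ l ∈ range (N + 1), bernsteinWeight N k l • v l := rfl

lemma bernsteinOp_const (N : ℕ) (x : E) : bernsteinOp N (fun _ => x) = fun _ => x := by
  ext k
  rw [bernsteinOp_apply, ← sum_smul, sum_bernsteinWeight, one_smul]

lemma bernsteinOp_pow (N k : ℕ) (t : ℝ) :
    bernsteinOp N (fun l => t ^ l) k = (1 + (k : ℝ) / N * (t - 1)) ^ N := by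
  rw [show 1 + (k : ℝ) / N * (t - 1) = (k : ℝ) / N * t + (1 - (k : ℝ) / N) by ring, add_pow,
    bernsteinOp_apply]
  refine sum_congr rfl fun l _ => ?_
  rw [bernsteinWeight_eq, mul_pow, smul_eq_mul]
  ring

lemma map_bernsteinOp (φ : E →ₗ[ℝ] F) (N : ℕ) (v : ℕ → E) :
    φ ∘ bernsteinOp N v = bernsteinOp N (φ ∘ v) := by
  ext k
  simp only [Function.comp_apply, bernsteinOp_apply, map_sum, map_smul]

lemma seminorm_bernsteinOp_le (p : Seminorm ℝ E) {N k : ℕ} (hk : k ≤ N) {v : ℕ → E} {g : ℕ → ℝ}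
    (hv : ∀ l ≤ N, p (v l) ≤ g l) : p (bernsteinOp N v k) ≤ bernsteinOp N g k := by
  rw [bernsteinOp_apply, bernsteinOp_apply]
  refine (le_sum_of_subadditive p (map_zero p).le (map_add_le_add p) _ _).trans
    (sum_le_sum fun l hl => ?_)
  rw [map_smul_eq_mul, Real.norm_of_nonneg (bernsteinWeight_nonneg hk l)]
  exact mul_le_mul_of_nonneg_left (hv l (by grind)) (bernsteinWeight_nonneg hk l)

/-- The defect `1 - B` of the Bernstein operator `B`, small on low-degree polynomial sequences. -/
def bernsteinDefect (N : ℕ) : Module.End ℝ (ℕ → E) := 1 - bernsteinOp N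

lemma bernsteinDefect_apply (N : ℕ) (v : ℕ → E) : bernsteinDefect N v = v - bernsteinOp N v := rfl

lemma bernsteinDefect_pow_congr {N k : ℕ} {v w : ℕ → E} (h : ∀ l ≤ N, v l = w l) (L : ℕ)
    (hk : k ≤ N) : (bernsteinDefect N ^ L) v k = (bernsteinDefect N ^ L) w k := by
  induction L generalizing k with
  | zero => exact h k hk
  | succ L ih =>
    have hsum : bernsteinOp N ((bernsteinDefect N ^ L) v) k =
        bernsteinOp N ((bernsteinDefect N ^ L) w) k := by
      rw [bernsteinOp_apply, bernsteinOp_apply]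
      exact sum_congr rfl fun l hl => by rw [ih (Nat.lt_succ_iff.1 (mem_range.1 hl))]
    simp only [pow_succ', Module.End.mul_apply, bernsteinDefect_apply, Pi.sub_apply, ih hk, hsum]

lemma map_bernsteinDefect_pow (φ : E →ₗ[ℝ] F) (N L : ℕ) (v : ℕ → E) :
    φ ∘ (bernsteinDefect N ^ L) v = (bernsteinDefect N ^ L) (φ ∘ v) := by
  induction L with
  | zero => rfl
  | succ L ih =>
    have map_sub_comp (w w' : ℕ → E) : φ ∘ (w - w') = φ ∘ w - φ ∘ w' := by ext; simp
    rw [pow_succ', Module.End.mul_apply, pow_succ', Module.End.mul_apply, bernsteinDefect_apply,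
      bernsteinDefect_apply, map_sub_comp, map_bernsteinOp, ih]

lemma seminorm_bernsteinDefect_pow_le (p : Seminorm ℝ E) {N : ℕ} {v : ℕ → E} {c : ℝ}
    (hv : ∀ l ≤ N, p (v l) ≤ c) (L : ℕ) {k : ℕ} (hk : k ≤ N) :
    p ((bernsteinDefect N ^ L) v k) ≤ 2 ^ L * c := by
  induction L generalizing k with
  | zero => simpa using hv k hk
  | succ L ih =>
    set w := (bernsteinDefect N ^ L) v
    have hBw : p (bernsteinOp N w k) ≤ 2 ^ L * c :=
      (seminorm_bernsteinOp_le p hk (g := fun _ => 2 ^ L * c) fun l hl => ih hl).trans_eq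
        (by rw [bernsteinOp_const])
    rw [pow_succ', Module.End.mul_apply, bernsteinDefect_apply]
    calc p (w k - bernsteinOp N w k) ≤ p (w k) + p (bernsteinOp N w k) := map_sub_le_add _ _ _
      _ ≤ 2 ^ L * c + 2 ^ L * c := add_le_add (ih hk) hBw
      _ = 2 ^ (L + 1) * c := by ring

lemma seminorm_sum_bernsteinDefect_pow_le (p : Seminorm ℝ E) {N : ℕ} {v : ℕ → E} {c : ℝ}
    (hv : ∀ l ≤ N, p (v l) ≤ c) (L : ℕ) {k : ℕ} (hk : k ≤ N) :
    p (∑ i ∈ range L, (bernsteinDefect N ^ i) v k) ≤ 2 ^ L * c := by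
  have hc : 0 ≤ c := (apply_nonneg p (v k)).trans (hv k hk)
  calc p (∑ i ∈ range L, (bernsteinDefect N ^ i) v k) ≤ ∑ i ∈ range L, 2 ^ i * c :=
        (le_sum_of_subadditive p (map_zero p).le (map_add_le_add p) _ _).trans
          (sum_le_sum fun i _ => seminorm_bernsteinDefect_pow_le p hv i hk)
    _ = (2 ^ L - 1) * c := by rw [← sum_mul, geom_sum_eq (by norm_num)]; norm_num
    _ ≤ 2 ^ L * c := by nlinarith

/-- Truncating the Neumann series of `(1 - Q)⁻¹` with `Q` the defect recovers a sequence from its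
binomial means up to `Q ^ L`. -/
theorem seminorm_le_bernsteinDefect_add (p : Seminorm ℝ E) {N : ℕ} {v : ℕ → E} {c : ℝ}
    (hv : ∀ l ≤ N, p (bernsteinOp N v l) ≤ c) (L : ℕ) {k : ℕ} (hk : k ≤ N) :
    p (v k) ≤ p ((bernsteinDefect N ^ L) v k) + 2 ^ L * c := by
  have neumann : v = (bernsteinDefect N ^ L) v +
      ∑ i ∈ range L, (bernsteinDefect N ^ i) (bernsteinOp N v) := by
    have h := geom_sum_mul_neg (bernsteinDefect N : Module.End ℝ (ℕ → E)) L
    rw [show 1 - bernsteinDefect N = (bernsteinOp N : Module.End ℝ (ℕ → E)) from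
      sub_sub_cancel _ _] at h
    have hv := congrArg (fun T => T v) h
    simp only [Module.End.mul_apply, LinearMap.sum_apply, LinearMap.sub_apply,
      Module.End.one_apply] at hv
    rw [hv, add_sub_cancel]
  calc p (v k) = p ((bernsteinDefect N ^ L) v k +
        ∑ i ∈ range L, (bernsteinDefect N ^ i) (bernsteinOp N v) k) := by
        conv_lhs => rw [neumann, Pi.add_apply, Finset.sum_apply]
    _ ≤ p ((bernsteinDefect N ^ L) v k) +
        p (∑ i ∈ range L, (bernsteinDefect N ^ i) (bernsteinOp N v) k) := map_add_le_add _ _ _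
    _ ≤ _ := by gcongr; exact seminorm_sum_bernsteinDefect_pow_le p hv L hk

lemma exp_sub_one_le_div {u : ℝ} (hu : u < 1) : Real.exp u - 1 ≤ u / (1 - u) := by
  have h1u : 0 < 1 - u := sub_pos.2 hu
  have hexp : Real.exp u * (1 - u) ≤ 1 :=
    calc Real.exp u * (1 - u) ≤ Real.exp u * Real.exp (-u) := by
          gcongr
          exact Real.one_sub_le_exp_neg u
      _ = 1 := by rw [← Real.exp_add, add_neg_cancel, Real.exp_zero]
  rw [le_div_iff₀ h1u]
  linarith

lemma bernsteinOp_exp_le {N k : ℕ} (hk : k ≤ N) {u : ℝ} (hu1 : u < 1) :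
    bernsteinOp N (fun l => Real.exp (u * l)) k ≤ Real.exp (u / (1 - u) * k) := by
  obtain ⟨h₀, h₁⟩ := div_mem_unitInterval hk
  have hbase : 1 + (k : ℝ) / N * (Real.exp u - 1) ≤ Real.exp ((k : ℝ) / N * (u / (1 - u))) :=
    calc 1 + (k : ℝ) / N * (Real.exp u - 1) ≤ (k : ℝ) / N * (u / (1 - u)) + 1 := by
          rw [add_comm]
          gcongr
          exact exp_sub_one_le_div hu1
      _ ≤ _ := Real.add_one_le_exp _
  have hpow (l : ℕ) : Real.exp (u * l) = Real.exp u ^ l := by rw [← Real.exp_nat_mul, mul_comm]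
  simp only [hpow, bernsteinOp_pow]
  calc (1 + (k : ℝ) / N * (Real.exp u - 1)) ^ N ≤ Real.exp ((k : ℝ) / N * (u / (1 - u))) ^ N := by
        refine pow_le_pow_left₀ ?_ hbase N
        nlinarith [Real.exp_pos u]
    _ = Real.exp (u / (1 - u) * k) := by
        rcases eq_or_ne N 0 with rfl | hN
        · simp [Nat.le_zero.1 hk]
        rw [← Real.exp_nat_mul]
        field_simp

lemma seminorm_bernsteinDefect_le_exp (p : Seminorm ℝ E) {N : ℕ} {v : ℕ → E} {R u : ℝ}
    (hR : 0 ≤ R) (hu : 0 ≤ u) (hu1 : u < 1) (hv : ∀ l ≤ N, p (v l) ≤ R * Real.exp (u * l)) {k : ℕ}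
    (hk : k ≤ N) : p (bernsteinDefect N v k) ≤ 2 * R * Real.exp (u / (1 - u) * k) := by
  have hmean : p (bernsteinOp N v k) ≤ R * Real.exp (u / (1 - u) * k) :=
    calc p (bernsteinOp N v k) ≤ bernsteinOp N (R • fun l : ℕ => Real.exp (u * l)) k :=
          seminorm_bernsteinOp_le p hk hv
      _ = R * bernsteinOp N (fun l : ℕ => Real.exp (u * l)) k := by rw [map_smul]; rfl
      _ ≤ _ := by gcongr; exact bernsteinOp_exp_le hk hu1
  have hself : p (v k) ≤ R * Real.exp (u / (1 - u) * k) :=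
    (hv k hk).trans (by gcongr; exact le_div_self hu (by linarith) (by linarith))
  rw [bernsteinDefect_apply]
  calc p (v k - bernsteinOp N v k) ≤ p (v k) + p (bernsteinOp N v k) := map_sub_le_add _ _ _
    _ ≤ _ := by linarith

theorem seminorm_bernsteinDefect_pow_le_exp (p : Seminorm ℝ E) {N : ℕ} {v : ℕ → E} {R u : ℝ}
    (hR : 0 ≤ R) (hu : 0 ≤ u) (hv : ∀ l ≤ N, p (v l) ≤ R * Real.exp (u * l)) {L : ℕ}
    (hL : L * u < 1) {k : ℕ} (hk : k ≤ N) :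
    p ((bernsteinDefect N ^ L) v k) ≤ 2 ^ L * R * Real.exp (u / (1 - L * u) * k) := by
  induction L generalizing k with
  | zero => simpa using hv k hk
  | succ L ih =>
    push_cast at hL ⊢
    have hL₀ : 0 < 1 - L * u := by linarith
    have step := seminorm_bernsteinDefect_le_exp p (u := u / (1 - L * u)) (by positivity)
      (by positivity) (by rw [div_lt_one hL₀]; linarith) (fun l hl => ih (by linarith) hl) hk
    have iterate : u / (1 - L * u) / (1 - u / (1 - L * u)) = u / (1 - (L + 1) * u) := by
      rw [one_sub_div hL₀.ne', div_div_div_cancel_right₀ hL₀.ne']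
      ring_nf
    rw [pow_succ', Module.End.mul_apply]
    calc _ ≤ _ := step
      _ = _ := by rw [iterate, pow_succ']; ring

end Bernstein

/-! ### Ratios of binomial coefficients -/

section ChooseRatio

/-- The sequence `k ↦ (k choose i) / (N choose i)`: the probability that a random `k`-subset of an
`N`-element set contains `i` given elements. It is the preimage of `k ↦ (k / N) ^ i` under the
Bernstein operator. -/
def chooseRatio (N i k : ℕ) : ℝ := k.choose i / N.choose i

lemma chooseRatio_zero (N : ℕ) : chooseRatio N 0 = fun _ => 1 := by
  ext k
  simp [chooseRatio]

lemma chooseRatio_nonneg (N i k : ℕ) : 0 ≤ chooseRatio N i k := by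
  unfold chooseRatio
  positivity

lemma chooseRatio_le_one {N k : ℕ} (i : ℕ) (hk : k ≤ N) : chooseRatio N i k ≤ 1 :=
  div_le_one_of_le₀ (Nat.cast_le.2 (Nat.choose_le_choose i hk)) (Nat.cast_nonneg _)

lemma choose_succ_mul_succ (n l : ℕ) :
    (n.choose (l + 1) : ℝ) * (l + 1) = n.choose l * ((n : ℝ) - l) := by
  rcases lt_or_ge n l with h | h
  · simp [Nat.choose_eq_zero_of_lt h, Nat.choose_eq_zero_of_lt (h.trans l.lt_succ_self)]
  · rw [← Nat.cast_sub h]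
    exact_mod_cast Nat.choose_succ_right_eq n l

lemma div_mul_chooseRatio {N l : ℕ} (hl : l < N) (k : ℕ) :
    (k : ℝ) / N * chooseRatio N l k =
      (1 - (l : ℝ) / N) * chooseRatio N (l + 1) k + (l : ℝ) / N * chooseRatio N l k := by
  have hN : (N : ℝ) ≠ 0 := Nat.cast_ne_zero.2 (by omega)
  have hNl : (N : ℝ) - l ≠ 0 := sub_ne_zero.2 (Nat.cast_injective.ne hl.ne')
  have hchoose : (N.choose l : ℝ) ≠ 0 := Nat.cast_ne_zero.2 (Nat.choose_pos hl.le).ne'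
  have hl1 : (l : ℝ) + 1 ≠ 0 := by positivity
  unfold chooseRatio
  rw [eq_div_of_mul_eq hl1 (choose_succ_mul_succ N l),
    eq_div_of_mul_eq hl1 (choose_succ_mul_succ k l)]
  field_simp
  ring

lemma bernsteinOp_chooseRatio {N i : ℕ} (hi : i ≤ N) :
    bernsteinOp N (chooseRatio N i) = fun k : ℕ => ((k : ℝ) / N) ^ i := by
  ext k
  set x : ℝ := (k : ℝ) / N with hx
  have vanish : ∀ l ∈ range i, bernsteinWeight N k l • chooseRatio N i l = 0 := fun l hl => by
    simp [chooseRatio, Nat.choose_eq_zero_of_lt (mem_range.1 hl)]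
  have shift (l : ℕ) : bernsteinWeight N k (i + l) • chooseRatio N i (i + l) =
      x ^ i * (x ^ l * (1 - x) ^ (N - i - l) * (N - i).choose l) := by
    have hchoose : (N.choose i : ℝ) ≠ 0 := Nat.cast_ne_zero.2 (Nat.choose_pos hi).ne'
    have absorb : (N.choose (i + l) : ℝ) * (i + l).choose i = N.choose i * (N - i).choose l := by
      have h := Nat.choose_mul (n := N) (Nat.le_add_right i l)
      rw [Nat.add_sub_cancel_left] at h
      exact_mod_cast h
    rw [bernsteinWeight_eq, chooseRatio, smul_eq_mul, ← hx, ← Nat.sub_sub, pow_add]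
    field_simp
    linear_combination x ^ i * x ^ l * (1 - x) ^ (N - i - l) * absorb
  rw [bernsteinOp_apply, show N + 1 = i + (N - i + 1) by omega, sum_range_add, sum_eq_zero vanish,
    zero_add, sum_congr rfl fun l _ => shift l, ← mul_sum, ← add_pow, add_sub_cancel, one_pow,
    mul_one]

lemma chooseRatio_le_pow {N k : ℕ} (hk : k ≤ N) {i : ℕ} (hi : i ≤ N) :
    chooseRatio N i k ≤ ((k : ℝ) / N) ^ i := by
  induction i with
  | zero => simp [chooseRatio_zero]
  | succ i ih =>
    obtain ⟨-, hx₁⟩ := div_mem_unitInterval hk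
    obtain ⟨hi₀, -⟩ := div_mem_unitInterval (show i ≤ N by omega)
    have hi₁ : (i : ℝ) / N < 1 := by
      rw [div_lt_one (Nat.cast_pos.2 (by omega))]
      exact_mod_cast hi
    have recurrence := div_mul_chooseRatio hi k
    have hle : chooseRatio N (i + 1) k ≤ chooseRatio N i k := by
      nlinarith [chooseRatio_nonneg N i k]
    calc chooseRatio N (i + 1) k ≤ (k : ℝ) / N * chooseRatio N i k := by
          nlinarith
      _ ≤ (k : ℝ) / N * ((k : ℝ) / N) ^ i := by gcongr; exact ih (by omega)
      _ = ((k : ℝ) / N) ^ (i + 1) := (pow_succ' _ _).symm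

lemma seminorm_div_mul_chooseRatio_le {N l : ℕ} (hl : l < N) (p : Seminorm ℝ (ℕ → ℝ)) {c : ℝ}
    (hpl : p (chooseRatio N l) ≤ c) (hpl' : p (chooseRatio N (l + 1)) ≤ c) :
    p ((fun k : ℕ => (k : ℝ) / N) * chooseRatio N l) ≤ c := by
  obtain ⟨hl₀, hl₁⟩ := div_mem_unitInterval hl.le
  have split : (fun k : ℕ => (k : ℝ) / N) * chooseRatio N l =
      (1 - (l : ℝ) / N) • chooseRatio N (l + 1) + ((l : ℝ) / N) • chooseRatio N l :=
    funext (div_mul_chooseRatio hl)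
  rw [split]
  refine (map_add_le_add p _ _).trans ?_
  rw [map_smul_eq_mul, map_smul_eq_mul, Real.norm_of_nonneg (sub_nonneg.2 hl₁),
    Real.norm_of_nonneg hl₀]
  nlinarith

/-- Controlling every seminorm that is bounded on the `chooseRatio`s of degree at most `i` amounts
to controlling coefficients with respect to them, and survives composition with linear maps. -/
lemma seminorm_pow_sub_chooseRatio_le {N i : ℕ} (hi : i ≤ N) (p : Seminorm ℝ (ℕ → ℝ))
    {c : ℝ} (hp : ∀ l ≤ i, p (chooseRatio N l) ≤ c) :
    p ((fun k : ℕ => ((k : ℝ) / N) ^ i) - chooseRatio N i) ≤ (i : ℝ) ^ 2 / N * c := by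
  induction i generalizing p with
  | zero => simp [chooseRatio_zero]
  | succ i ih =>
    let X : Module.End ℝ (ℕ → ℝ) := LinearMap.mulLeft ℝ fun k : ℕ => (k : ℝ) / N
    have hc : 0 ≤ c := (apply_nonneg p _).trans (hp 0 (Nat.zero_le _))
    have hpX : p (X ((fun k : ℕ => ((k : ℝ) / N) ^ i) - chooseRatio N i)) ≤ (i : ℝ) ^ 2 / N * c :=
      ih (by omega) (p.comp X) fun l hl => seminorm_div_mul_chooseRatio_le (by omega) p
        (hp l (by omega)) (hp (l + 1) (by omega))
    have hpdiff : p (chooseRatio N i - chooseRatio N (i + 1)) ≤ c + c :=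
      (map_sub_le_add p _ _).trans (add_le_add (hp i (by omega)) (hp (i + 1) le_rfl))
    have split : (fun k : ℕ => ((k : ℝ) / N) ^ (i + 1)) - chooseRatio N (i + 1) =
        X ((fun k : ℕ => ((k : ℝ) / N) ^ i) - chooseRatio N i) +
          ((i : ℝ) / N) • (chooseRatio N i - chooseRatio N (i + 1)) := by
      ext k
      simp only [X, Pi.sub_apply, Pi.add_apply, Pi.smul_apply, LinearMap.mulLeft_apply,
        Pi.mul_apply, smul_eq_mul]
      linear_combination div_mul_chooseRatio (show i < N by omega) k
    calc p ((fun k : ℕ => ((k : ℝ) / N) ^ (i + 1)) - chooseRatio N (i + 1))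
        ≤ (i : ℝ) ^ 2 / N * c + (i : ℝ) / N * (c + c) := by
          rw [split]
          refine (map_add_le_add p _ _).trans (add_le_add hpX ?_)
          rw [map_smul_eq_mul, Real.norm_of_nonneg (by positivity)]
          gcongr
      _ = ((i : ℝ) ^ 2 + 2 * i) / N * c := by ring
      _ ≤ ((i + 1 : ℕ) : ℝ) ^ 2 / N * c := by
          gcongr
          push_cast
          linarith

theorem seminorm_bernsteinDefect_pow_chooseRatio_le {N d : ℕ} (hd : d ≤ N)
    (p : Seminorm ℝ (ℕ → ℝ)) {c : ℝ} (hp : ∀ i ≤ d, p (chooseRatio N i) ≤ c) (L : ℕ) :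
    ∀ i ≤ d, p ((bernsteinDefect N ^ L) (chooseRatio N i)) ≤ ((d : ℝ) ^ 2 / N) ^ L * c := by
  induction L generalizing p c with
  | zero => simpa using hp
  | succ L ih =>
    have hc : 0 ≤ c := (apply_nonneg p _).trans (hp 0 (Nat.zero_le d))
    have step : ∀ i ≤ d, p.comp (bernsteinDefect N) (chooseRatio N i) ≤ (d : ℝ) ^ 2 / N * c :=
      fun i hi => by
        rw [Seminorm.comp_apply, bernsteinDefect_apply, bernsteinOp_chooseRatio (hi.trans hd),
          map_sub_rev]
        refine (seminorm_pow_sub_chooseRatio_le (hi.trans hd) p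
          fun l hl => hp l (hl.trans hi)).trans ?_
        gcongr
    intro i hi
    calc p ((bernsteinDefect N ^ (L + 1)) (chooseRatio N i))
        = p.comp (bernsteinDefect N) ((bernsteinDefect N ^ L) (chooseRatio N i)) := by
          rw [pow_succ', Module.End.mul_apply, Seminorm.comp_apply]
      _ ≤ ((d : ℝ) ^ 2 / N) ^ L * ((d : ℝ) ^ 2 / N * c) := ih _ step i hi
      _ = ((d : ℝ) ^ 2 / N) ^ (L + 1) * c := by ring

end ChooseRatio

/-! ### Krawtchouk polynomials -/

section Krawtchouk

lemma card_superset_powersetCard {ι : Type*} [Fintype ι] [DecidableEq ι] {k : ℕ}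
    (hk : k ≤ Fintype.card ι) (I : Finset ι) :
    (#{Z ∈ powersetCard k univ | I ⊆ Z} : ℝ) =
      (Fintype.card ι).choose k * chooseRatio (Fintype.card ι) #I k := by
  have hcompl : #{Z ∈ powersetCard k univ | I ⊆ Z} = #(powersetCard (Fintype.card ι - k) Iᶜ) := by
    refine card_nbij' compl compl ?_ ?_ (fun _ _ => compl_compl _) (fun _ _ => compl_compl _)
    · intro Z hZ
      simp only [coe_filter, mem_powersetCard, Set.mem_ofPred_eq, mem_coe] at hZ ⊢
      exact ⟨compl_subset_compl.2 hZ.2, by rw [card_compl, hZ.1.2]⟩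
    · intro Z hZ
      simp only [coe_filter, mem_powersetCard, Set.mem_ofPred_eq, mem_coe] at hZ ⊢
      exact ⟨⟨subset_univ _, by rw [card_compl, hZ.2]; omega⟩, subset_compl_comm.1 hZ.1⟩
  have hI : #I ≤ Fintype.card ι := card_le_univ I
  have hpos : ((Fintype.card ι).choose #I : ℝ) ≠ 0 := Nat.cast_ne_zero.2 (Nat.choose_pos hI).ne'
  rw [hcompl, card_powersetCard, card_compl, chooseRatio, ← mul_div_assoc, eq_div_iff hpos]
  norm_cast
  rcases lt_or_ge k #I with h | h
  · rw [Nat.choose_eq_zero_of_lt h, Nat.choose_eq_zero_of_lt (by omega), zero_mul, mul_zero]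
  · rw [Nat.choose_mul h, mul_comm, ← Nat.choose_symm (show k - #I ≤ Fintype.card ι - #I by omega)]
    congr 2
    omega

/-- Expand `t ^ #(Z ∩ J) = (1 + (t - 1)) ^ #(Z ∩ J)` over the subsets of `Z ∩ J`. -/
lemma expect_powersetCard_pow_card_inter {ι : Type*} [Fintype ι] [DecidableEq ι] {k : ℕ}
    (hk : k ≤ Fintype.card ι) (J : Finset ι) (t : ℝ) :
    𝔼 Z ∈ powersetCard k univ, t ^ #(Z ∩ J) =
      ∑ i ∈ range (#J + 1), (#J).choose i * (t - 1) ^ i * chooseRatio (Fintype.card ι) i k := by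
  have expand (Z : Finset ι) : t ^ #(Z ∩ J) =
      ∑ I ∈ J.powerset, if I ⊆ Z then (t - 1) ^ #I else 0 := by
    have h := sum_pow_mul_eq_add_pow (t - 1) 1 (Z ∩ J)
    rw [sub_add_cancel] at h
    rw [← h, ← sum_filter]
    simp only [one_pow, mul_one]
    exact sum_congr (by ext I; simp only [mem_powerset, mem_filter, subset_inter_iff]; tauto)
      fun _ _ => rfl
  have count (I : Finset ι) : ∑ Z ∈ powersetCard k univ, (if I ⊆ Z then (t - 1) ^ #I else 0) =
      (Fintype.card ι).choose k * ((t - 1) ^ #I * chooseRatio (Fintype.card ι) #I k) := by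
    rw [← sum_filter, sum_const, nsmul_eq_mul, card_superset_powersetCard hk]
    ring
  have hpos : ((Fintype.card ι).choose k : ℝ) ≠ 0 := Nat.cast_ne_zero.2 (Nat.choose_pos hk).ne'
  rw [expect_eq_sum_div_card, card_powersetCard, card_univ, div_eq_iff hpos, mul_comm]
  simp only [expand]
  rw [sum_comm, sum_congr rfl fun I _ => count I, ← mul_sum, sum_powerset_apply_card
    (fun i => (t - 1) ^ i * chooseRatio (Fintype.card ι) i k)]
  simp only [nsmul_eq_mul, mul_assoc]

/-- The coefficients of the normalized Krawtchouk polynomial in the basis `chooseRatio N`. -/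
def krawtchoukCoeff (m j i : ℕ) : ℝ := (-(m : ℝ)⁻¹) ^ j * (j.choose i * (-(m : ℝ) - 1) ^ i)

/-- The normalized Krawtchouk polynomial of degree `j`, as a function of `k`: the Fourier
coefficient of the sphere of radius `N - k` at a character of weight `j`. -/
def krawtchouk (m N j : ℕ) : ℕ → ℝ := ∑ i ∈ range (j + 1), krawtchoukCoeff m j i • chooseRatio N i

lemma krawtchouk_apply (m N j k : ℕ) : krawtchouk m N j k = (-(m : ℝ)⁻¹) ^ j *
    ∑ i ∈ range (j + 1), j.choose i * (-(m : ℝ) - 1) ^ i * chooseRatio N i k := by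
  simp only [krawtchouk, krawtchoukCoeff, Finset.sum_apply, Pi.smul_apply, smul_eq_mul, mul_sum,
    mul_assoc]

lemma krawtchouk_card_eq_expect {ι : Type*} [Fintype ι] [DecidableEq ι] (m : ℕ) {k : ℕ}
    (hk : k ≤ Fintype.card ι) (J : Finset ι) : krawtchouk m (Fintype.card ι) #J k =
      𝔼 Z ∈ powersetCard k univ, (-(m : ℝ)⁻¹) ^ #J * (-(m : ℝ)) ^ #(Z ∩ J) := by
  rw [← mul_expect, expect_powersetCard_pow_card_inter hk, krawtchouk_apply]

lemma abs_krawtchouk_le {m N j k : ℕ} (hm : 1 ≤ m) (hk : k ≤ N) (hj : j ≤ N) :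
    |krawtchouk m N j k| ≤ ((m : ℝ)⁻¹ * (1 + (m - 1) * ((k : ℝ) / N))) ^ j := by
  have hm' : 0 ≤ (m : ℝ) - 1 := sub_nonneg.2 (Nat.one_le_cast.2 hm)
  obtain ⟨J, -, rfl⟩ := exists_subset_card_eq (s := (univ : Finset (Fin N))) (by simpa using hj)
  have hk' : k ≤ Fintype.card (Fin N) := by simpa using hk
  have hexpect := krawtchouk_card_eq_expect m hk' J
  have hmean := expect_powersetCard_pow_card_inter hk' J (m : ℝ)
  rw [Fintype.card_fin] at hexpect hmean
  calc |krawtchouk m N #J k|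
      ≤ 𝔼 Z ∈ powersetCard k univ, ((m : ℝ)⁻¹) ^ #J * (m : ℝ) ^ #(Z ∩ J) := by
        rw [hexpect]
        refine (abs_expect_le _ _).trans_eq (expect_congr rfl fun Z _ => ?_)
        rw [abs_mul, abs_pow, abs_pow, abs_neg, abs_neg, abs_inv, Nat.abs_cast]
    _ = ((m : ℝ)⁻¹) ^ #J *
        ∑ i ∈ range (#J + 1), (#J).choose i * ((m : ℝ) - 1) ^ i * chooseRatio N i k := by
        rw [← mul_expect, hmean]
    _ ≤ ((m : ℝ)⁻¹) ^ #J *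
        ∑ i ∈ range (#J + 1), (#J).choose i * ((m : ℝ) - 1) ^ i * ((k : ℝ) / N) ^ i := by
        gcongr with i hi
        exact chooseRatio_le_pow hk (by grind)
    _ = ((m : ℝ)⁻¹ * (1 + (m - 1) * ((k : ℝ) / N))) ^ #J := by
        rw [mul_pow, add_comm (1 : ℝ), add_pow]
        congr 1
        refine sum_congr rfl fun i _ => ?_
        rw [mul_pow]
        ring

lemma inv_mul_one_add_mem_unitInterval {m N k : ℕ} (hm : 1 ≤ m) (hk : k ≤ N) :
    (m : ℝ)⁻¹ * (1 + (m - 1) * ((k : ℝ) / N)) ∈ Set.Icc 0 1 := by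
  obtain ⟨-, h₁⟩ := div_mem_unitInterval hk
  have hm' : (1 : ℝ) ≤ m := Nat.one_le_cast.2 hm
  refine ⟨by positivity, ?_⟩
  rw [inv_mul_le_iff₀ (by linarith)]
  nlinarith

lemma abs_krawtchouk_le_one {m N j k : ℕ} (hm : 1 ≤ m) (hk : k ≤ N) (hj : j ≤ N) :
    |krawtchouk m N j k| ≤ 1 :=
  have ⟨h₀, h₁⟩ := inv_mul_one_add_mem_unitInterval hm hk
  (abs_krawtchouk_le hm hk hj).trans (pow_le_one₀ h₀ h₁)

lemma abs_krawtchouk_le_exp {m N j k J : ℕ} (hm : 1 ≤ m) (hk : k ≤ N) (hj : j ≤ N) (hJ : J ≤ j) :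
    |krawtchouk m N j k| ≤ ((m : ℝ)⁻¹) ^ J * Real.exp ((m - 1) * J / N * k) := by
  obtain ⟨h₀, h₁⟩ := inv_mul_one_add_mem_unitInterval hm hk
  have hm₀ : 0 ≤ (m : ℝ) - 1 := sub_nonneg.2 (Nat.one_le_cast.2 hm)
  calc |krawtchouk m N j k| ≤ ((m : ℝ)⁻¹ * (1 + (m - 1) * ((k : ℝ) / N))) ^ j :=
        abs_krawtchouk_le hm hk hj
    _ ≤ ((m : ℝ)⁻¹ * (1 + (m - 1) * ((k : ℝ) / N))) ^ J := pow_le_pow_of_le_one h₀ h₁ hJ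
    _ ≤ ((m : ℝ)⁻¹ * Real.exp ((m - 1) * ((k : ℝ) / N))) ^ J := by
        gcongr
        rw [add_comm]
        exact Real.add_one_le_exp _
    _ = ((m : ℝ)⁻¹) ^ J * Real.exp ((m - 1) * J / N * k) := by
        rw [mul_pow, ← Real.exp_nat_mul]
        ring_nf

lemma sum_abs_krawtchoukCoeff_le {m : ℕ} (hm : 2 ≤ m) (j : ℕ) :
    ∑ i ∈ range (j + 1), |krawtchoukCoeff m j i| ≤ 2 ^ j := by
  have hm' : (2 : ℝ) ≤ m := by exact_mod_cast hm
  have habs (i : ℕ) : |krawtchoukCoeff m j i| =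
      ((m : ℝ)⁻¹) ^ j * (((m : ℝ) + 1) ^ i * 1 ^ (j - i) * j.choose i) := by
    rw [krawtchoukCoeff, ← neg_add', abs_mul, abs_mul, abs_pow, abs_pow, abs_neg, abs_neg, abs_inv,
      Nat.abs_cast, Nat.abs_cast, abs_of_nonneg (by positivity)]
    ring
  simp only [habs]
  rw [← mul_sum, ← add_pow, ← mul_pow]
  gcongr
  rw [inv_mul_le_iff₀ (by linarith)]
  linarith

lemma abs_bernsteinDefect_pow_krawtchouk_le_two_pow {m N j k : ℕ} (hm : 1 ≤ m) (hj : j ≤ N)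
    (hk : k ≤ N) (L : ℕ) : |(bernsteinDefect N ^ L) (krawtchouk m N j) k| ≤ 2 ^ L := by
  simpa using seminorm_bernsteinDefect_pow_le (normSeminorm ℝ ℝ) (c := 1)
    (fun l hl => abs_krawtchouk_le_one hm hl hj) L hk

lemma abs_bernsteinDefect_pow_krawtchouk_le_degree {m N j k : ℕ} (hm : 2 ≤ m) (hj : j ≤ N)
    (hk : k ≤ N) (L : ℕ) :
    |(bernsteinDefect N ^ L) (krawtchouk m N j) k| ≤ 2 ^ j * ((j : ℝ) ^ 2 / N) ^ L := by
  let p : Seminorm ℝ (ℕ → ℝ) := (normSeminorm ℝ ℝ).comp (LinearMap.proj k)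
  have hp : ∀ i ≤ j, p (chooseRatio N i) ≤ 1 := fun i _ =>
    (Real.norm_of_nonneg (chooseRatio_nonneg N i k)).trans_le (chooseRatio_le_one i hk)
  have hdefect := seminorm_bernsteinDefect_pow_chooseRatio_le hj p hp L
  simp only [mul_one] at hdefect
  calc p ((bernsteinDefect N ^ L) (krawtchouk m N j))
      ≤ ∑ i ∈ range (j + 1), p (krawtchoukCoeff m j i •
          (bernsteinDefect N ^ L) (chooseRatio N i)) := by
        rw [krawtchouk, map_sum]
        simp only [map_smul]
        exact le_sum_of_subadditive p (map_zero p).le (map_add_le_add p) _ _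
    _ ≤ ∑ i ∈ range (j + 1), |krawtchoukCoeff m j i| * ((j : ℝ) ^ 2 / N) ^ L := by
        refine sum_le_sum fun i hi => ?_
        rw [map_smul_eq_mul, Real.norm_eq_abs]
        gcongr
        exact hdefect i (by grind)
    _ ≤ 2 ^ j * ((j : ℝ) ^ 2 / N) ^ L := by
        rw [← sum_mul]
        gcongr
        exact sum_abs_krawtchoukCoeff_le hm j

end Krawtchouk

/-! ### Decay of iterated Bernstein defects -/

section Decay

variable {m N j k J L M : ℕ}

lemma cast_div_le_inv_of_le_div (hk : k ≤ N / (m + 1)) : (k : ℝ) / N ≤ ((m : ℝ) + 1)⁻¹ := by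
  have hkN : k * (m + 1) ≤ N := (Nat.le_div_iff_mul_le m.succ_pos).1 hk
  have hkN' : (k : ℝ) * (m + 1) ≤ N := by exact_mod_cast hkN
  refine div_le_of_le_mul₀ (by positivity) (by positivity) ?_
  rwa [le_inv_mul_iff₀ (by positivity), mul_comm]

/-- The gain `2 * (m - 1) / (m + 1) ≤ log m` beats the loss `3 / 2 * (m - 1) / (m + 1)`. -/
lemma inv_pow_mul_exp_le (hm : 2 ≤ m) (J : ℕ) :
    ((m : ℝ)⁻¹) ^ J * Real.exp (3 / 2 * ((m - 1) * J * ((m : ℝ) + 1)⁻¹)) ≤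
      Real.exp (-(J : ℝ) / 6) := by
  have hm' : (2 : ℝ) ≤ m := by exact_mod_cast hm
  have hlog : 2 * (((m : ℝ) - 1) * ((m : ℝ) + 1)⁻¹) ≤ Real.log m := by
    have h := Real.le_log_one_add_of_nonneg (show 0 ≤ (m : ℝ) - 1 by linarith)
    rw [show (m : ℝ) - 1 + 2 = m + 1 by ring, add_sub_cancel] at h
    rwa [← mul_assoc, ← div_eq_mul_inv]
  have hthird : 1 / 3 ≤ ((m : ℝ) - 1) * ((m : ℝ) + 1)⁻¹ := by
    rw [← div_eq_mul_inv, div_le_div_iff₀ (by norm_num) (by linarith)]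
    linarith
  have hinv : ((m : ℝ)⁻¹) ^ J = Real.exp (-(J * Real.log m)) := by
    rw [Real.exp_neg, Real.exp_nat_mul, Real.exp_log (by linarith), inv_pow]
  rw [hinv, ← Real.exp_add, Real.exp_le_exp]
  nlinarith [mul_le_mul_of_nonneg_left hlog J.cast_nonneg,
    mul_le_mul_of_nonneg_left hthird J.cast_nonneg]

lemma abs_bernsteinDefect_pow_krawtchouk_le_exp (hm : 2 ≤ m) (hj : j ≤ N) (hJ : J ≤ j)
    (hL : 3 * L * (m - 1) * J ≤ (N : ℝ)) (hk : k ≤ N / (m + 1)) :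
    |(bernsteinDefect N ^ L) (krawtchouk m N j) k| ≤ 2 ^ L * Real.exp (-(J : ℝ) / 6) := by
  have hm₁ : 1 ≤ m := by omega
  have hm' : 0 ≤ (m : ℝ) - 1 := sub_nonneg.2 (Nat.one_le_cast.2 hm₁)
  set u : ℝ := (m - 1) * J / N with hu
  have hu₀ : 0 ≤ u := by positivity
  have hLu : L * u ≤ 1 / 3 := by
    rw [hu, ← mul_div_assoc]
    exact div_le_of_le_mul₀ (by positivity) (by norm_num) (by linarith)
  have hrate : u / (1 - L * u) ≤ 3 / 2 * u := by
    rw [div_le_iff₀ (by linarith)]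
    nlinarith
  have huk : u * k ≤ (m - 1) * J * ((m : ℝ) + 1)⁻¹ := by
    rw [hu, div_mul_eq_mul_div, mul_div_assoc]
    gcongr
    exact cast_div_le_inv_of_le_div hk
  calc |(bernsteinDefect N ^ L) (krawtchouk m N j) k|
      ≤ 2 ^ L * ((m : ℝ)⁻¹) ^ J * Real.exp (u / (1 - L * u) * k) :=
        seminorm_bernsteinDefect_pow_le_exp (normSeminorm ℝ ℝ) (by positivity) hu₀
          (fun l hl => abs_krawtchouk_le_exp hm₁ hl hj hJ) (by linarith)
          (hk.trans (Nat.div_le_self _ _))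
    _ ≤ 2 ^ L * (((m : ℝ)⁻¹) ^ J * Real.exp (3 / 2 * ((m - 1) * J * ((m : ℝ) + 1)⁻¹))) := by
        rw [mul_assoc]
        gcongr 2 ^ L * (_ * Real.exp ?_)
        calc u / (1 - L * u) * k ≤ 3 / 2 * u * k := by gcongr
          _ ≤ 3 / 2 * ((m - 1) * J * ((m : ℝ) + 1)⁻¹) := by rw [mul_assoc]; gcongr
    _ ≤ 2 ^ L * Real.exp (-(J : ℝ) / 6) := by
        gcongr
        exact inv_pow_mul_exp_le hm J

/-- The degree separating low from high frequencies: from here on the exponential bound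
`exp (-J / 6)` is at most `N ^ (-M)`. -/
def frequencyCutoff (M N : ℕ) : ℕ := ⌈6 * M * Real.log N⌉₊

lemma frequencyCutoff_le_log (M N : ℕ) : (frequencyCutoff M N : ℝ) ≤ 6 * M * Real.log N + 1 :=
  (Nat.ceil_lt_add_one (by positivity)).le

lemma sqrt_sqrt_pow_four (N : ℕ) : √√(N : ℝ) ^ 4 = N := by
  rw [pow_mul _ 2 2, Real.sq_sqrt (by positivity), Real.sq_sqrt (by positivity)]

lemma one_le_sqrt_sqrt (hN : 1 ≤ N) : 1 ≤ √√(N : ℝ) :=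
  Real.one_le_sqrt.2 (Real.one_le_sqrt.2 (Nat.one_le_cast.2 hN))

lemma frequencyCutoff_le_sqrt (hM : 1 ≤ M) (hN : 1 ≤ N) :
    (frequencyCutoff M N : ℝ) ≤ 25 * M * √√N := by
  have hM' : (1 : ℝ) ≤ M := Nat.one_le_cast.2 hM
  have hs := one_le_sqrt_sqrt hN
  have hlog : Real.log N ≤ 4 * √√N := by
    rw [← sqrt_sqrt_pow_four N, Real.log_pow, sqrt_sqrt_pow_four]
    push_cast
    linarith [Real.log_le_sub_one_of_pos (zero_lt_one.trans_le hs)]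
  calc (frequencyCutoff M N : ℝ) ≤ 6 * M * Real.log N + 1 := frequencyCutoff_le_log M N
    _ ≤ 6 * M * (4 * √√N) + M * √√N := by
        gcongr
        exact one_le_mul_of_one_le_of_one_le hM' hs
    _ = 25 * M * √√N := by ring

lemma two_pow_le_of_le_frequencyCutoff (hN : 1 ≤ N) (hj : j ≤ frequencyCutoff M N) :
    (2 : ℝ) ^ j ≤ Real.exp 1 * (N : ℝ) ^ (6 * M) := by
  have hj' : (j : ℝ) ≤ frequencyCutoff M N := Nat.cast_le.2 hj
  calc (2 : ℝ) ^ j ≤ Real.exp 1 ^ j := by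
        gcongr
        linarith [Real.add_one_le_exp 1]
    _ = Real.exp j := by rw [← Real.exp_nat_mul, mul_one]
    _ ≤ Real.exp (1 + (6 * M : ℕ) * Real.log N) := by
        gcongr
        push_cast
        linarith [frequencyCutoff_le_log M N]
    _ = Real.exp 1 * (N : ℝ) ^ (6 * M) := by
        rw [Real.exp_add, Real.exp_nat_mul, Real.exp_log (by exact_mod_cast hN)]

lemma exp_neg_frequencyCutoff_le (hN : 1 ≤ N) (M : ℕ) :
    Real.exp (-(frequencyCutoff M N : ℝ) / 6) ≤ ((N : ℝ) ^ M)⁻¹ := by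
  have hceil : 6 * M * Real.log N ≤ frequencyCutoff M N := Nat.le_ceil _
  calc Real.exp (-(frequencyCutoff M N : ℝ) / 6) ≤ Real.exp (-(M * Real.log N)) := by
        gcongr
        linarith
    _ = ((N : ℝ) ^ M)⁻¹ := by
        rw [Real.exp_neg, Real.exp_nat_mul, Real.exp_log (by exact_mod_cast hN)]

lemma abs_bernsteinDefect_pow_krawtchouk_le_of_le_cutoff (hm : 2 ≤ m) (hM : 1 ≤ M) (hN : 1 ≤ N)
    (hj : j ≤ N) (hjJ : j ≤ frequencyCutoff M N) (hk : k ≤ N) :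
    |(bernsteinDefect N ^ (14 * M)) (krawtchouk m N j) k| ≤
      Real.exp 1 * (625 * (M : ℝ) ^ 2) ^ (14 * M) / (N : ℝ) ^ M := by
  have hj' : (j : ℝ) ≤ 25 * M * √√N := (Nat.cast_le.2 hjJ).trans (frequencyCutoff_le_sqrt hM hN)
  have hratio : (j : ℝ) ^ 2 / N ≤ 625 * (M : ℝ) ^ 2 / √√N ^ 2 := by
    calc (j : ℝ) ^ 2 / N ≤ (25 * M * √√N) ^ 2 / N := by gcongr
      _ = (25 * M * √√N) ^ 2 / √√N ^ 4 := by rw [sqrt_sqrt_pow_four]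
      _ = 625 * (M : ℝ) ^ 2 / √√N ^ 2 := by field_simp; ring
  have hpow : (√√(N : ℝ) ^ 2) ^ (14 * M) = (N : ℝ) ^ (6 * M) * (N : ℝ) ^ M := by
    rw [← pow_mul, ← pow_add, show 2 * (14 * M) = 4 * (6 * M + M) by ring, pow_mul,
      sqrt_sqrt_pow_four]
  calc |(bernsteinDefect N ^ (14 * M)) (krawtchouk m N j) k|
      ≤ 2 ^ j * ((j : ℝ) ^ 2 / N) ^ (14 * M) :=
        abs_bernsteinDefect_pow_krawtchouk_le_degree hm hj hk _
    _ ≤ (Real.exp 1 * (N : ℝ) ^ (6 * M)) * (625 * (M : ℝ) ^ 2 / √√N ^ 2) ^ (14 * M) := by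
        gcongr
        exact two_pow_le_of_le_frequencyCutoff hN hjJ
    _ = Real.exp 1 * (625 * (M : ℝ) ^ 2) ^ (14 * M) / (N : ℝ) ^ M := by
        rw [div_pow, hpow]
        field_simp

lemma abs_bernsteinDefect_pow_krawtchouk_le_of_cutoff_le (hm : 2 ≤ m) (hM : 1 ≤ M) (hN : 1 ≤ N)
    (hj : j ≤ N) (hjJ : frequencyCutoff M N ≤ j) (hk : k ≤ N / (m + 1))
    (hS : 1050 * (M : ℝ) ^ 2 * m ≤ √√N) :
    |(bernsteinDefect N ^ (14 * M)) (krawtchouk m N j) k| ≤ 2 ^ (14 * M) / (N : ℝ) ^ M := by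
  have hs := one_le_sqrt_sqrt hN
  have hstep : 3 * (14 * M : ℕ) * ((m : ℝ) - 1) * frequencyCutoff M N ≤ N :=
    calc 3 * (14 * M : ℕ) * ((m : ℝ) - 1) * frequencyCutoff M N
        ≤ 3 * (14 * M : ℕ) * (m : ℝ) * (25 * M * √√N) := by
          gcongr
          · linarith
          · exact frequencyCutoff_le_sqrt hM hN
      _ = 1050 * (M : ℝ) ^ 2 * m * √√N := by push_cast; ring
      _ ≤ √√N * √√N := by gcongr
      _ = √√(N : ℝ) ^ 2 := (sq _).symm
      _ ≤ √√(N : ℝ) ^ 4 := pow_le_pow_right₀ hs (by norm_num)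
      _ = N := sqrt_sqrt_pow_four N
  calc |(bernsteinDefect N ^ (14 * M)) (krawtchouk m N j) k|
      ≤ 2 ^ (14 * M) * Real.exp (-(frequencyCutoff M N : ℝ) / 6) :=
        abs_bernsteinDefect_pow_krawtchouk_le_exp hm hj hjJ hstep hk
    _ ≤ 2 ^ (14 * M) * ((N : ℝ) ^ M)⁻¹ := by
        gcongr
        exact exp_neg_frequencyCutoff_le hN M
    _ = 2 ^ (14 * M) / (N : ℝ) ^ M := (div_eq_mul_inv _ _).symm

lemma abs_bernsteinDefect_pow_krawtchouk_le_of_sqrt_le (hm : 1 ≤ m) (hN : 1 ≤ N) (hj : j ≤ N)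
    (hk : k ≤ N) {S : ℝ} (hS : √√N ≤ S) (L M : ℕ) :
    |(bernsteinDefect N ^ L) (krawtchouk m N j) k| ≤ 2 ^ L * S ^ (4 * M) / (N : ℝ) ^ M := by
  rw [le_div_iff₀ (by positivity)]
  calc |(bernsteinDefect N ^ L) (krawtchouk m N j) k| * (N : ℝ) ^ M
      ≤ 2 ^ L * (√√(N : ℝ) ^ 4) ^ M := by
        rw [sqrt_sqrt_pow_four]
        gcongr
        exact abs_bernsteinDefect_pow_krawtchouk_le_two_pow hm hj hk L
    _ ≤ 2 ^ L * S ^ (4 * M) := by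
        rw [← pow_mul]
        gcongr

theorem exists_abs_bernsteinDefect_pow_krawtchouk_le (hm : 2 ≤ m) (hM : 1 ≤ M) :
    ∃ C : ℝ, 0 ≤ C ∧ ∀ N j k : ℕ, 1 ≤ N → j ≤ N → k ≤ N / (m + 1) →
      |(bernsteinDefect N ^ (14 * M)) (krawtchouk m N j) k| ≤ C / (N : ℝ) ^ M := by
  set S : ℝ := 1050 * (M : ℝ) ^ 2 * m
  set Clow : ℝ := Real.exp 1 * (625 * (M : ℝ) ^ 2) ^ (14 * M)
  set Chigh : ℝ := 2 ^ (14 * M)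
  set Csmall : ℝ := 2 ^ (14 * M) * S ^ (4 * M)
  refine ⟨max Clow (max Chigh Csmall), by positivity, fun N j k hN hj hk => ?_⟩
  have hkN : k ≤ N := hk.trans (Nat.div_le_self _ _)
  suffices ∃ C ∈ ({Clow, Chigh, Csmall} : Set ℝ),
      |(bernsteinDefect N ^ (14 * M)) (krawtchouk m N j) k| ≤ C / (N : ℝ) ^ M by
    obtain ⟨C, hC, hle⟩ := this
    refine hle.trans ?_
    gcongr
    rcases hC with rfl | rfl | rfl <;> simp
  rcases le_total j (frequencyCutoff M N) with hlow | hhigh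
  · exact ⟨Clow, by simp,
      abs_bernsteinDefect_pow_krawtchouk_le_of_le_cutoff hm hM hN hj hlow hkN⟩
  rcases le_total S √√N with hlarge | hsmall
  · exact ⟨Chigh, by simp,
      abs_bernsteinDefect_pow_krawtchouk_le_of_cutoff_le hm hM hN hj hhigh hk hlarge⟩
  · exact ⟨Csmall, by simp,
      abs_bernsteinDefect_pow_krawtchouk_le_of_sqrt_le (by omega) hN hj hkN hsmall _ _⟩

end Decay

/-! ### Fourier coefficients of spheres -/

section CharacterSums

variable {ι H : Type*} [Fintype ι] [DecidableEq ι] [AddCommGroup H]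

/-- The restriction of a character of `ι → H` to the `i`-th coordinate axis. -/
def coordChar (ψ : AddChar (ι → H) ℂ) (i : ι) : AddChar H ℂ :=
  ψ.compAddMonoidHom (AddMonoidHom.single (fun _ => H) i)

lemma prod_coordChar (ψ : AddChar (ι → H) ℂ) (y : ι → H) : ∏ i, coordChar ψ i (y i) = ψ y :=
  (map_prod ψ.toMonoidHom (fun i => Multiplicative.ofAdd (Pi.single i (y i))) univ).symm.trans
    (congrArg ψ (univ_sum_single y))

open scoped Classical in
/-- The coordinates on which a character is nontrivial. -/
def charSupport (ψ : AddChar (ι → H) ℂ) : Finset ι := {i | coordChar ψ i ≠ 0}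

lemma charSupport_zero : charSupport (0 : AddChar (ι → H) ℂ) = ∅ := by
  classical
  exact filter_false_of_mem fun i _ h => h rfl

variable [Fintype H] [DecidableEq H]

/-- The coordinates at which `y` vanishes. -/
def zeroSet (y : ι → H) : Finset ι := {i | y i = 0}

open scoped Classical in
lemma sum_erase_zero_addChar (χ : AddChar H ℂ) :
    ∑ a ∈ univ.erase 0, χ a = if χ = 0 then (Fintype.card H : ℂ) - 1 else -1 := by
  rw [sum_erase_eq_sub (mem_univ _), AddChar.sum_eq_ite, AddChar.map_zero_eq_one]
  split_ifs <;> ring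

lemma sum_addChar_zeroSet_eq (ψ : AddChar (ι → H) ℂ) (Z : Finset ι) :
    ∑ y with zeroSet y = Z, ψ y =
      ∏ i, if i ∈ Z then 1 else if i ∈ charSupport ψ then -1 else (Fintype.card H : ℂ) - 1 := by
  classical
  have hfiber : ({y | zeroSet y = Z} : Finset (ι → H)) =
      Fintype.piFinset fun i => if i ∈ Z then {0} else univ.erase 0 := by
    ext y
    simp only [mem_filter_univ, Fintype.mem_piFinset, Finset.ext_iff, zeroSet]
    refine forall_congr' fun i => ?_
    split_ifs with hi <;> simp [hi]
  rw [hfiber]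
  simp only [← prod_coordChar ψ]
  rw [← prod_univ_sum]
  refine prod_congr rfl fun i _ => ?_
  simp only [charSupport, mem_filter_univ]
  split_ifs with hi hψ
  · rw [sum_singleton, AddChar.map_zero_eq_one]
  · rw [sum_erase_zero_addChar, if_neg hψ]
  · rw [sum_erase_zero_addChar, if_pos (not_not.1 hψ)]

lemma prod_ite_mem_ite_mem {c : ℂ} (hc : c ≠ 0) (Z J : Finset ι) :
    (∏ i, if i ∈ Z then 1 else if i ∈ J then -1 else c) =
      c ^ (Fintype.card ι - #Z) * ((-c⁻¹) ^ #J * (-c) ^ #(Z ∩ J)) := by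
  have hprod (S : Finset ι) (a : ℂ) : a ^ #S = ∏ i, if i ∈ S then a else 1 := by
    rw [prod_ite_mem, univ_inter, prod_const]
  rw [← card_compl, hprod Zᶜ, hprod J, hprod (Z ∩ J), ← prod_mul_distrib, ← prod_mul_distrib]
  refine prod_congr rfl fun i _ => ?_
  by_cases hZ : i ∈ Z <;> by_cases hJ : i ∈ J <;> simp [hZ, hJ, hc]

/-- Summing first over the zero set turns the sum over a sphere into the subset average that
defines the Krawtchouk polynomial. -/
theorem sum_addChar_card_zeroSet_eq {m k : ℕ} (hm : m ≠ 0) (hH : Fintype.card H = m + 1)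
    (hk : k ≤ Fintype.card ι) (ψ : AddChar (ι → H) ℂ) :
    ∑ y with #(zeroSet y) = k, ψ y = ((Fintype.card ι).choose k * m ^ (Fintype.card ι - k) : ℕ) *
      krawtchouk m (Fintype.card ι) #(charSupport ψ) k := by
  have hm' : (m : ℂ) ≠ 0 := Nat.cast_ne_zero.2 hm
  have hchoose : ((Fintype.card ι).choose k : ℂ) ≠ 0 :=
    Nat.cast_ne_zero.2 (Nat.choose_pos hk).ne'
  have hcard : (Fintype.card H : ℂ) - 1 = m := by rw [hH]; push_cast; ring
  calc ∑ y with #(zeroSet y) = k, ψ y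
      = ∑ Z ∈ powersetCard k univ, ∑ y with zeroSet y = Z, ψ y := by
        rw [sum_fiberwise_eq_sum_filter]
        simp only [mem_powersetCard_univ]
    _ = ∑ Z ∈ powersetCard k univ, (m : ℂ) ^ (Fintype.card ι - k) *
          ((-(m : ℂ)⁻¹) ^ #(charSupport ψ) * (-(m : ℂ)) ^ #(Z ∩ charSupport ψ)) := by
        refine sum_congr rfl fun Z hZ => ?_
        rw [sum_addChar_zeroSet_eq, hcard, prod_ite_mem_ite_mem hm', (mem_powersetCard.1 hZ).2]
    _ = _ := by
        rw [krawtchouk_card_eq_expect m hk, expect_eq_sum_div_card, card_powersetCard, card_univ,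
          ← mul_sum]
        push_cast
        field_simp

lemma krawtchouk_zero (m N k : ℕ) : krawtchouk m N 0 k = 1 := by
  simp [krawtchouk_apply, chooseRatio_zero]

lemma card_filter_card_zeroSet_eq {m k : ℕ} (hm : m ≠ 0) (hH : Fintype.card H = m + 1)
    (hk : k ≤ Fintype.card ι) :
    #{y : ι → H | #(zeroSet y) = k} = (Fintype.card ι).choose k * m ^ (Fintype.card ι - k) := by
  have h := sum_addChar_card_zeroSet_eq hm hH hk 0
  rw [charSupport_zero, card_empty, krawtchouk_zero] at h
  simp only [AddChar.zero_apply, sum_const, nsmul_eq_mul, mul_one, Complex.ofReal_one] at h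
  exact_mod_cast h

end CharacterSums

section Sphere

variable {m N k : ℕ}

/-- The normalized indicator of the sphere of points with exactly `k` vanishing coordinates. -/
def sphereMean (m N k : ℕ) : (Fin N → ZMod (m + 1)) → ℂ := sigmaC m N ((N : ℤ) - k)

lemma card_zeroSet_add_hw (y : Fin N → ZMod (m + 1)) : #(zeroSet y) + hw y = N :=
  (card_filter_add_card_filter_not fun i => y i = 0).trans (card_fin N)

lemma sphereMean_apply (hm : m ≠ 0) (hk : k ≤ N) (y : Fin N → ZMod (m + 1)) :
    sphereMean m N k y =
      if #(zeroSet y) = k then ((N.choose k * m ^ (N - k) : ℕ) : ℂ)⁻¹ else 0 := by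
  have hsphere (x : Fin N → ZMod (m + 1)) : (hw x : ℤ) = (N : ℤ) - k ↔ #(zeroSet x) = k := by
    have := card_zeroSet_add_hw x
    omega
  have hcard := card_filter_card_zeroSet_eq (ι := Fin N) hm (ZMod.card (m + 1))
    (hk.trans_eq (Fintype.card_fin N).symm)
  rw [Fintype.card_fin] at hcard
  simp only [sphereMean, sigmaC, hsphere, hcard]

lemma choose_mul_pow_ne_zero {R : Type*} [Semiring R] [CharZero R] (hm : m ≠ 0) (hk : k ≤ N) :
    ((N.choose k * m ^ (N - k) : ℕ) : R) ≠ 0 :=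
  Nat.cast_ne_zero.2 (mul_ne_zero (Nat.choose_pos hk).ne' (pow_ne_zero _ hm))

theorem charCoeff_sphereMean (hm : m ≠ 0) (hk : k ≤ N) (ψ : AddChar (Fin N → ZMod (m + 1)) ℂ) :
    charCoeff ψ (sphereMean m N k) = krawtchouk m N #(charSupport ψ) k := by
  have hsum := sum_addChar_card_zeroSet_eq hm (ZMod.card (m + 1))
    (hk.trans_eq (Fintype.card_fin N).symm) ψ
  rw [Fintype.card_fin] at hsum
  simp only [charCoeff_apply, sphereMean_apply hm hk, ite_mul, zero_mul]
  rw [← sum_filter, ← mul_sum, hsum, inv_mul_cancel_left₀ (choose_mul_pow_ne_zero hm hk)]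

lemma ofReal_norm_sphereMean (y : Fin N → ZMod (m + 1)) :
    (‖sphereMean m N k y‖ : ℂ) = sphereMean m N k y := by
  rw [sphereMean, sigmaC]
  split_ifs <;> simp

lemma sum_norm_sphereMean (hm : m ≠ 0) (hk : k ≤ N) : ∑ y, ‖sphereMean m N k y‖ = 1 := by
  refine Complex.ofReal_injective ?_
  calc ((∑ y, ‖sphereMean m N k y‖ : ℝ) : ℂ) = charCoeff 0 (sphereMean m N k) := by
        rw [Complex.ofReal_sum, charCoeff_apply]
        simp only [ofReal_norm_sphereMean, AddChar.zero_apply, mul_one]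
    _ = 1 := by
        rw [charCoeff_sphereMean hm hk, charSupport_zero, card_empty, krawtchouk_zero]
        rfl

lemma prodKernel_zeroBiased (s : ℝ) (y : Fin N → ZMod (m + 1)) :
    prodKernel (zeroBiased m s) y = s ^ #(zeroSet y) * ((1 - s) / m) ^ hw y := by
  simp only [prodKernel, zeroBiased, prod_ite, prod_const]
  rfl

/-- Picking every coordinate independently to be zero with probability `k / N` produces each
sphere with its Bernstein weight. -/
theorem bernsteinOp_sphereMean (hm : m ≠ 0) (k : ℕ) (y : Fin N → ZMod (m + 1)) :
    bernsteinOp N (sphereMean m N) k y = (prodKernel (zeroBiased m (k / N)) y : ℝ) := by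
  have hle : #(zeroSet y) ≤ N := (Nat.le_add_right _ _).trans_eq (card_zeroSet_add_hw y)
  have hhw : N - #(zeroSet y) = hw y := Nat.sub_eq_of_eq_add' (card_zeroSet_add_hw y).symm
  have hchoose : (N.choose #(zeroSet y) : ℂ) ≠ 0 := Nat.cast_ne_zero.2 (Nat.choose_pos hle).ne'
  calc bernsteinOp N (sphereMean m N) k y
      = ∑ l ∈ range (N + 1), if #(zeroSet y) = l then
          (bernsteinWeight N k l : ℂ) * ((N.choose l * m ^ (N - l) : ℕ) : ℂ)⁻¹ else 0 := by
        rw [bernsteinOp_apply, Finset.sum_apply]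
        refine sum_congr rfl fun l hl => ?_
        rw [Pi.smul_apply, sphereMean_apply hm (Nat.lt_succ_iff.1 (mem_range.1 hl)),
          Complex.real_smul, mul_ite, mul_zero]
    _ = (bernsteinWeight N k #(zeroSet y) : ℂ) *
          ((N.choose #(zeroSet y) * m ^ hw y : ℕ) : ℂ)⁻¹ := by
        rw [sum_ite_eq, if_pos (mem_range.2 (Nat.lt_succ_iff.2 hle)), hhw]
    _ = (prodKernel (zeroBiased m (k / N)) y : ℝ) := by
        rw [prodKernel_zeroBiased, bernsteinWeight_eq, hhw, div_pow (1 - _)]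
        push_cast
        field_simp

end Sphere

/-! ### The distant spherical maximal function -/

section SphereDefect

variable {m N k : ℕ} {p : ℝ}

/-- The part of the sphere mean left over by `L` rounds of approximation by product kernels. -/
def sphereDefect (m N L k : ℕ) : (Fin N → ZMod (m + 1)) → ℂ :=
  (bernsteinDefect N ^ L) (sphereMean m N) k

lemma sum_norm_sphereDefect_le (hm : m ≠ 0) (L : ℕ) (hk : k ≤ N) :
    ∑ y, ‖sphereDefect m N L k y‖ ≤ 2 ^ L := by
  let l₁ : Seminorm ℝ ((Fin N → ZMod (m + 1)) → ℂ) := (normSeminorm ℝ _).comp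
    (WithLp.linearEquiv 1 ℝ ((Fin N → ZMod (m + 1)) → ℂ)).symm.toLinearMap
  have hl₁ (g : (Fin N → ZMod (m + 1)) → ℂ) : l₁ g = ∑ y, ‖g y‖ := PiLp.norm_eq_of_L1 _
  have hmean : ∀ l ≤ N, l₁ (sphereMean m N l) ≤ 1 := fun l hl =>
    (hl₁ _).trans_le (sum_norm_sphereMean hm hl).le
  rw [← hl₁]
  exact (seminorm_bernsteinDefect_pow_le l₁ hmean L hk).trans_eq (mul_one _)

lemma charCoeff_sphereDefect (hm : m ≠ 0) (L : ℕ) (hk : k ≤ N)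
    (ψ : AddChar (Fin N → ZMod (m + 1)) ℂ) : charCoeff ψ (sphereDefect m N L k) =
      ((bernsteinDefect N ^ L) (krawtchouk m N #(charSupport ψ)) k : ℝ) := by
  have hφ := congrFun (map_bernsteinDefect_pow ((charCoeff ψ).restrictScalars ℝ) N L
    (sphereMean m N)) k
  have hreal := congrFun (map_bernsteinDefect_pow Complex.ofRealCLM.toLinearMap N L
    (krawtchouk m N #(charSupport ψ))) k
  refine hφ.trans (Eq.trans ?_ hreal.symm)
  exact bernsteinDefect_pow_congr (fun l hl => charCoeff_sphereMean hm hl ψ) L hk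

lemma norm_conv_sphereMean_le (hm : m ≠ 0) (L : ℕ) (hk : k ≤ N)
    (f : (Fin N → ZMod (m + 1)) → ℂ) (x : Fin N → ZMod (m + 1)) :
    ‖conv (sphereMean m N k) f x‖ ≤
      ‖conv (sphereDefect m N L k) f x‖ + 2 ^ L * extremeMajorant (fun y => ‖f y‖) x := by
  let normConvAt : Seminorm ℝ ((Fin N → ZMod (m + 1)) → ℂ) :=
    (normSeminorm ℝ ℂ).comp ((LinearMap.proj x ∘ₗ conv.flip f).restrictScalars ℝ)
  refine seminorm_le_bernsteinDefect_add normConvAt (fun l hl => ?_) L hk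
  obtain ⟨h₀, h₁⟩ := div_mem_unitInterval hl
  have hkernel : ∀ y, ‖bernsteinOp N (sphereMean m N) l y‖ =
      prodKernel (zeroBiased m (l / N)) y := fun y => by
    rw [bernsteinOp_sphereMean hm, Complex.norm_real]
    exact Real.norm_of_nonneg (prodKernel_nonneg (zeroBiased_nonneg h₀ h₁) y)
  calc ‖conv (bernsteinOp N (sphereMean m N) l) f x‖
      ≤ conv (prodKernel (zeroBiased m (l / N))) (fun y => ‖f y‖) x := by
        simpa only [hkernel] using norm_conv_le (bernsteinOp N (sphereMean m N) l) f x
    _ ≤ extremeMajorant (fun y => ‖f y‖) x :=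
        conv_zeroBiased_le_extremeMajorant hm (fun _ => norm_nonneg _) h₀ h₁ x

lemma exists_norm_charCoeff_sphereDefect_le (hm : 2 ≤ m) {M : ℕ} (hM : 1 ≤ M) :
    ∃ (L : ℕ) (C : ℝ), 0 ≤ C ∧ ∀ N k : ℕ, 1 ≤ N → k ≤ N / (m + 1) →
      ∀ ψ : AddChar (Fin N → ZMod (m + 1)) ℂ,
        ‖charCoeff ψ (sphereDefect m N L k)‖ ≤ C / (N : ℝ) ^ M := by
  obtain ⟨C, hC, hdecay⟩ := exists_abs_bernsteinDefect_pow_krawtchouk_le hm hM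
  refine ⟨14 * M, C, hC, fun N k hN hk ψ => ?_⟩
  rw [charCoeff_sphereDefect (by omega) _ (hk.trans (Nat.div_le_self _ _)), Complex.norm_real]
  exact hdecay N _ k hN (card_finset_fin_le _) hk

/-- The Fourier decay exponent `M` is chosen so large that interpolation still leaves a factor
`1 / N`, which pays for summing over all radii. -/
lemma exists_sum_norm_conv_sphereDefect_rpow_le (hm : 2 ≤ m) (hp : 1 < p) (hp2 : p ≤ 2) :
    ∃ (L : ℕ) (B : ℝ), 0 ≤ B ∧ ∀ N k : ℕ, 1 ≤ N → k ≤ N / (m + 1) →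
      ∀ f : (Fin N → ZMod (m + 1)) → ℂ,
        ∑ x, ‖conv (sphereDefect m N L k) f x‖ ^ p ≤ B / N * ∑ x, ‖f x‖ ^ p := by
  obtain ⟨M, hM⟩ := exists_nat_ge (2 * p - 2)⁻¹
  have hq : 0 < 2 * p - 2 := by linarith
  have hM₁ : 1 ≤ M := Nat.cast_pos.1 ((inv_pos.2 hq).trans_le hM)
  have hMp : 1 ≤ M * (2 * p - 2) := (inv_le_iff_one_le_mul₀ hq).1 hM
  obtain ⟨L, C, hC, hdecay⟩ := exists_norm_charCoeff_sphereDefect_le hm hM₁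
  refine ⟨L, (((2 : ℝ) ^ L) ^ (2 / p - 1)) ^ p * C ^ (2 * p - 2), by positivity,
    fun N k hN hk f => ?_⟩
  have hN₁ : (1 : ℝ) ≤ N := Nat.one_le_cast.2 hN
  have hexp : (2 - 2 / p) * p = 2 * p - 2 := by field_simp
  have hgain : ((C / (N : ℝ) ^ M) ^ (2 - 2 / p)) ^ p ≤ C ^ (2 * p - 2) / N := by
    rw [← Real.rpow_mul (by positivity), hexp, Real.div_rpow hC (by positivity),
      ← Real.rpow_natCast, ← Real.rpow_mul (by positivity)]
    gcongr
    exact Real.self_le_rpow_of_one_le hN₁ hMp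
  refine (sum_norm_conv_rpow_le (sum_norm_sphereDefect_le (by omega) L
    (hk.trans (Nat.div_le_self _ _))) (hdecay N k hN hk) f hp hp2).trans ?_
  rw [Real.mul_rpow (by positivity) (by positivity), mul_div_assoc]
  gcongr

end SphereDefect

section DistantMax

variable {m N : ℕ} {p : ℝ} (f : (Fin N → ZMod (m + 1)) → ℂ) (x : Fin N → ZMod (m + 1))

lemma norm_conv_sphereMean_le_distantMax {k : ℕ} (hk : k ≤ N / (m + 1)) :
    ‖conv (sphereMean m N k) f x‖ ≤ distantMax m N f x :=
  le_sup' (fun k : ℕ => ‖conv (sphereMean m N k) f x‖) (mem_range.2 (Nat.lt_succ_iff.2 hk))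

lemma exists_distantMax_eq :
    ∃ k ≤ N / (m + 1), distantMax m N f x = ‖conv (sphereMean m N k) f x‖ := by
  obtain ⟨k, hk, heq⟩ := exists_mem_eq_sup' nonempty_range_add_one
    fun k : ℕ => ‖conv (sphereMean m N k) f x‖
  exact ⟨k, Nat.lt_succ_iff.1 (mem_range.1 hk), heq⟩

lemma distantMax_nonneg : 0 ≤ distantMax m N f x :=
  (norm_nonneg _).trans (norm_conv_sphereMean_le_distantMax f x (Nat.zero_le _))

lemma distantMax_rpow_le (hm : m ≠ 0) (L : ℕ) (hp : 1 ≤ p) :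
    distantMax m N f x ^ p ≤
      2 ^ (p - 1) * (∑ k ∈ range (N / (m + 1) + 1), ‖conv (sphereDefect m N L k) f x‖ ^ p +
        (2 ^ L * extremeMajorant (fun y => ‖f y‖) x) ^ p) := by
  obtain ⟨k, hk, heq⟩ := exists_distantMax_eq f x
  have hmajorant : 0 ≤ 2 ^ L * extremeMajorant (fun y => ‖f y‖) x :=
    mul_nonneg (by positivity) (extremeMajorant_nonneg (fun _ => norm_nonneg _) x)
  rw [heq]
  calc ‖conv (sphereMean m N k) f x‖ ^ p
      ≤ (‖conv (sphereDefect m N L k) f x‖ + 2 ^ L * extremeMajorant (fun y => ‖f y‖) x) ^ p := by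
        gcongr
        exact norm_conv_sphereMean_le hm L (hk.trans (Nat.div_le_self _ _)) f x
    _ ≤ 2 ^ (p - 1) * (‖conv (sphereDefect m N L k) f x‖ ^ p +
          (2 ^ L * extremeMajorant (fun y => ‖f y‖) x) ^ p) :=
        add_rpow_le_two_rpow_mul (norm_nonneg _) hmajorant hp
    _ ≤ _ := by
        gcongr
        exact single_le_sum (f := fun k => ‖conv (sphereDefect m N L k) f x‖ ^ p)
          (fun _ _ => by positivity) (mem_range.2 (Nat.lt_succ_iff.2 hk))

/-- Jensen's inequality for the probability measures `sphereMean m N k`. -/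
lemma distantMax_rpow_le_distantMax_rpow (hm : m ≠ 0) {r : ℝ} (hr : 1 ≤ r) :
    distantMax m N f x ^ r ≤ distantMax m N (fun y => (‖f y‖ ^ r : ℝ)) x := by
  obtain ⟨k, hk, heq⟩ := exists_distantMax_eq f x
  set w : (Fin N → ZMod (m + 1)) → ℝ := fun y => ‖sphereMean m N k y‖
  have hreal : conv (sphereMean m N k) (fun y => ((‖f y‖ ^ r : ℝ) : ℂ)) x =
      (conv w (fun y => ‖f y‖ ^ r) x : ℝ) := by
    simp only [conv_apply, Complex.ofReal_sum, Complex.ofReal_mul, w, ofReal_norm_sphereMean]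
  calc distantMax m N f x ^ r ≤ conv w (fun y => ‖f y‖) x ^ r := by
        rw [heq]
        gcongr
        exact norm_conv_le _ _ _
    _ ≤ conv w (fun y => ‖f y‖ ^ r) x :=
        Real.rpow_arith_mean_le_arith_mean_rpow univ w (fun y => ‖f (x - y)‖)
          (fun _ _ => norm_nonneg _) (sum_norm_sphereMean hm (hk.trans (Nat.div_le_self _ _)))
          (fun _ _ => norm_nonneg _) hr
    _ ≤ ‖conv (sphereMean m N k) (fun y => ((‖f y‖ ^ r : ℝ) : ℂ)) x‖ := by
        rw [hreal, Complex.norm_real]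
        exact le_abs_self _
    _ ≤ distantMax m N (fun y => (‖f y‖ ^ r : ℝ)) x := norm_conv_sphereMean_le_distantMax _ x hk

end DistantMax

section MaximalInequality

variable {m : ℕ} {p : ℝ}

theorem exists_sum_distantMax_rpow_le_of_le_two (hm : 2 ≤ m) (hp : 1 < p) (hp2 : p ≤ 2) :
    ∃ C : ℝ, 0 ≤ C ∧ ∀ N : ℕ, 1 ≤ N → ∀ f : (Fin N → ZMod (m + 1)) → ℂ,
      ∑ x, distantMax m N f x ^ p ≤ C * ∑ x, ‖f x‖ ^ p := by
  obtain ⟨L, B, hB, herror⟩ := exists_sum_norm_conv_sphereDefect_rpow_le hm hp hp2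
  set A : ℝ := (2 * (p / (p - 1))) ^ p
  have hm₀ : m ≠ 0 := by omega
  refine ⟨2 ^ (p - 1) * (2 * B + (2 ^ L) ^ p * A), by positivity, fun N hN f => ?_⟩
  have hradii : ∑ k ∈ range (N / (m + 1) + 1), ∑ x, ‖conv (sphereDefect m N L k) f x‖ ^ p ≤
      2 * B * ∑ x, ‖f x‖ ^ p := by
    have hcount : ((N / (m + 1) + 1 : ℕ) : ℝ) ≤ 2 * N := by
      have := Nat.div_le_self N (m + 1)
      exact_mod_cast (by omega : N / (m + 1) + 1 ≤ 2 * N)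
    calc _ ≤ ∑ _k ∈ range (N / (m + 1) + 1), B / N * ∑ x, ‖f x‖ ^ p :=
          sum_le_sum fun k hk => herror N k hN (Nat.lt_succ_iff.1 (mem_range.1 hk)) f
      _ ≤ 2 * N * (B / N * ∑ x, ‖f x‖ ^ p) := by
          rw [sum_const, card_range, nsmul_eq_mul]
          gcongr
      _ = 2 * B * ∑ x, ‖f x‖ ^ p := by field_simp
  have hmajorant : ∑ x, (2 ^ L * extremeMajorant (fun y => ‖f y‖) x) ^ p ≤
      (2 ^ L) ^ p * (A * ∑ x, ‖f x‖ ^ p) := by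
    simp only [Real.mul_rpow (pow_nonneg zero_le_two L)
      (extremeMajorant_nonneg (fun y => norm_nonneg (f y)) _), ← mul_sum]
    gcongr
    exact sum_extremeMajorant_rpow_le hm₀ (fun _ => norm_nonneg _) hp
  calc ∑ x, distantMax m N f x ^ p
      ≤ 2 ^ (p - 1) * (∑ k ∈ range (N / (m + 1) + 1), ∑ x, ‖conv (sphereDefect m N L k) f x‖ ^ p +
          ∑ x, (2 ^ L * extremeMajorant (fun y => ‖f y‖) x) ^ p) := by
        rw [sum_comm, ← sum_add_distrib, mul_sum]
        exact sum_le_sum fun x _ => distantMax_rpow_le f x hm₀ L hp.le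
    _ ≤ 2 ^ (p - 1) * (2 * B * ∑ x, ‖f x‖ ^ p + (2 ^ L) ^ p * (A * ∑ x, ‖f x‖ ^ p)) := by gcongr
    _ = 2 ^ (p - 1) * (2 * B + (2 ^ L) ^ p * A) * ∑ x, ‖f x‖ ^ p := by ring

theorem exists_sum_distantMax_rpow_le (hm : 2 ≤ m) (hp : 1 < p) :
    ∃ C : ℝ, 0 ≤ C ∧ ∀ N : ℕ, 1 ≤ N → ∀ f : (Fin N → ZMod (m + 1)) → ℂ,
      ∑ x, distantMax m N f x ^ p ≤ C * ∑ x, ‖f x‖ ^ p := by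
  rcases le_total p 2 with hp2 | hp2
  · exact exists_sum_distantMax_rpow_le_of_le_two hm hp hp2
  obtain ⟨C, hC, hL2⟩ := exists_sum_distantMax_rpow_le_of_le_two hm one_lt_two le_rfl
  refine ⟨C, hC, fun N hN f => ?_⟩
  set F : (Fin N → ZMod (m + 1)) → ℂ := fun y => (‖f y‖ ^ (p / 2) : ℝ)
  have hF (y) : ‖F y‖ ^ (2 : ℝ) = ‖f y‖ ^ p := by
    rw [Complex.norm_real, Real.norm_of_nonneg (by positivity), ← Real.rpow_mul (norm_nonneg _),
      div_mul_cancel₀ p two_ne_zero]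
  calc ∑ x, distantMax m N f x ^ p ≤ ∑ x, distantMax m N F x ^ (2 : ℝ) := by
        refine sum_le_sum fun x _ => ?_
        have hf := distantMax_nonneg f x
        rw [← div_mul_cancel₀ p two_ne_zero, Real.rpow_mul hf]
        gcongr
        exact distantMax_rpow_le_distantMax_rpow f x (by omega) (by linarith)
    _ ≤ C * ∑ x, ‖F x‖ ^ (2 : ℝ) := hL2 N hN F
    _ = C * ∑ x, ‖f x‖ ^ p := by simp only [hF]

end MaximalInequality

theorem statement16 (m : ℕ) (hm : 2 ≤ m) (p : ℝ) (hp : 1 < p) :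
    ∃ C : ℝ, ∀ N : ℕ, 1 ≤ N → ∀ f : (Fin N → ZMod (m + 1)) → ℂ,
      (∑ x, distantMax m N f x ^ p) ^ (1 / p) ≤ C * (∑ x, ‖f x‖ ^ p) ^ (1 / p) := by
  obtain ⟨C, hC, hmax⟩ := exists_sum_distantMax_rpow_le hm hp
  refine ⟨C ^ (1 / p), fun N hN f => ?_⟩
  have hleft : 0 ≤ ∑ x, distantMax m N f x ^ p :=
    sum_nonneg fun x _ => Real.rpow_nonneg (distantMax_nonneg f x) p
  rw [← Real.mul_rpow hC (sum_nonneg fun _ _ => by positivity)]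
  exact Real.rpow_le_rpow hleft (hmax N hN f) (by positivity)
end
end

section
/- For all integers 0 ≤ r, k ≤ N, setting ℓ = max(0, r+k−N) and a_j = C(N,k)^{−1} · C(r,j) · C(N−r, k−j) · m^{−j} for ℓ ≤ j ≤ min(r,k), one has |κ_k^N(r)| ≤ max_{ℓ ≤ j ≤ min(r,k)} a_j; that is, each Krawtchouk polynomial value is dominated by the maximal magnitude among the summands in its defining alternating sum. -/
noncomputable section

/-- The normalized Krawtchouk polynomial
`κ_k^N(r) = Σ_{j=max(0,r+k-N)}^{min(r,k)} (-1)^j C(N,k)⁻¹ C(r,j) C(N-r,k-j) m^{-j}`.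
(Natural subtraction `r + k - N` is exactly `max (0, r + k - N)`.) -/
def kraw (m NN k r : ℕ) : ℝ :=
  ∑ j ∈ Finset.Icc (r + k - NN) (min r k),
    (-1 : ℝ) ^ j * ((NN.choose k : ℝ))⁻¹ * (r.choose j : ℝ) *
      (((NN - r).choose (k - j) : ℝ)) * ((m : ℝ)⁻¹) ^ j

/-- Krawtchouk polynomial with integer arguments: `0` if any argument is negative. -/
def krawZ (m : ℕ) (NN k r : ℤ) : ℝ :=
  if 0 ≤ NN ∧ 0 ≤ k ∧ 0 ≤ r then kraw m NN.toNat k.toNat r.toNat else 0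

/-- Binomial coefficient with integer arguments: `0` if either argument is negative. -/
def chooseZ (a b : ℤ) : ℕ :=
  if 0 ≤ a ∧ 0 ≤ b then a.toNat.choose b.toNat else 0

/-- `a_j = C(N,k)⁻¹ C(r,j) C(N-r,k-j) m^{-j}`, the magnitude of the `j`-th summand
in the defining alternating sum of `κ_k^N(r)`. -/
def aKraw (m N k r j : ℕ) : ℝ :=
  ((N.choose k : ℝ))⁻¹ * (r.choose j : ℝ) * (((N - r).choose (k - j) : ℝ)) * ((m : ℝ)⁻¹) ^ j

/-!
The magnitudes `a_j` form a positive log-concave sequence, because binomial coefficients are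
log-concave; hence after a first descent `a_(j+1) ≤ a_j` the sequence is nonincreasing. For such a
sequence, peel off the first term `a_l` of the alternating sum: if `a_(l+1) ≤ a_l`, the whole
sequence is nonincreasing and the sum lies between `0` and `a_l`; otherwise the invariant
`a_l - max a ≤ a_l - a_(l+1) + ⋯ ≤ max a` propagates from the tail.
-/

open Finset

section DescentsPersistOn

variable {α : Type*} [Preorder α] {a : ℕ → α} {l u : ℕ}

/-- A strong form of unimodality on the integer interval `[l, u]`: after a first
descent `a (j + 1) ≤ a j`, where equality counts as a descent, the sequence is nonincreasing. -/
def DescentsPersistOn (a : ℕ → α) (l u : ℕ) : Prop :=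
  ∀ j, l ≤ j → j + 2 ≤ u → a (j + 1) ≤ a j → a (j + 2) ≤ a (j + 1)

lemma DescentsPersistOn.antitoneOn (ha : DescentsPersistOn a l u) (h : a (l + 1) ≤ a l) :
    AntitoneOn a (Set.Icc l u) := by
  have step : ∀ j, l ≤ j → j + 1 ≤ u → a (j + 1) ≤ a j := by
    intro j hlj
    induction j, hlj using Nat.le_induction with
    | base => exact fun _ => h
    | succ j hlj ih => exact fun hju => ha j hlj hju (ih (by omega))
  exact antitoneOn_of_succ_le Set.ordConnected_Icc fun j _ hj hj' => step j hj.1 hj'.2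

end DescentsPersistOn

section AlternatingSum

variable {R : Type*} [Ring R] {a : ℕ → R} {l u : ℕ}

lemma sum_Icc_neg_one_pow_add_mul (h : l ≤ u) :
    ∑ j ∈ Icc l u, (-1) ^ (l + j) * a j =
      a l - ∑ j ∈ Icc (l + 1) u, (-1) ^ (l + 1 + j) * a j := by
  rw [← add_sum_Ioc_eq_sum_Icc h, ← Icc_add_one_left_eq_Ioc, Even.neg_one_pow ⟨l, rfl⟩, one_mul,
    sub_eq_add_neg, ← sum_neg_distrib]
  congr 1
  refine sum_congr rfl fun j _ => ?_
  rw [add_right_comm, pow_succ, mul_neg_one, neg_mul, neg_neg]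

variable [LinearOrder R] [IsOrderedRing R]

lemma alternating_sum_mem_Icc_of_antitoneOn (hlu : l ≤ u) (ha : AntitoneOn a (Set.Icc l u))
    (hu : 0 ≤ a u) :
    ∑ j ∈ Icc l u, (-1) ^ (l + j) * a j ∈ Set.Icc 0 (a l) := by
  induction hlu using Nat.decreasingInduction with
  | self => simp [hu]
  | of_succ l hlu ih =>
    obtain ⟨tail_nonneg, tail_le⟩ := ih (ha.mono (Set.Icc_subset_Icc_left l.le_succ))
    have first_le : a (l + 1) ≤ a l := ha ⟨le_rfl, by omega⟩ ⟨l.le_succ, hlu⟩ l.le_succ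
    rw [sum_Icc_neg_one_pow_add_mul (by omega)]
    exact ⟨sub_nonneg.2 (tail_le.trans first_le), sub_le_self _ tail_nonneg⟩

namespace DescentsPersistOn

lemma alternating_sum_mem_Icc {M : R} (hlu : l ≤ u) (ha : DescentsPersistOn a l u)
    (hu : 0 ≤ a u) (hM : ∀ j ∈ Icc l u, a j ≤ M) :
    ∑ j ∈ Icc l u, (-1) ^ (l + j) * a j ∈ Set.Icc (a l - M) M := by
  induction hlu using Nat.decreasingInduction with
  | self =>
    have huM : a u ≤ M := hM u (by simp)
    simp [huM, hu.trans huM]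
  | of_succ l hlu ih =>
    obtain ⟨le_tail, tail_le⟩ := ih (fun j hj => ha j (by omega))
      (fun j hj => hM j (Icc_subset_Icc_left l.le_succ hj))
    have peel := sum_Icc_neg_one_pow_add_mul (a := a) hlu.le
    refine ⟨peel ▸ sub_le_sub_left tail_le _, ?_⟩
    rcases le_total (a (l + 1)) (a l) with descent | ascent
    · calc ∑ j ∈ Icc l u, (-1) ^ (l + j) * a j
          ≤ a l :=
            (alternating_sum_mem_Icc_of_antitoneOn hlu.le (ha.antitoneOn descent) hu).2
        _ ≤ M := hM l (left_mem_Icc.2 hlu.le)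
    · calc ∑ j ∈ Icc l u, (-1) ^ (l + j) * a j
          = a l - ∑ j ∈ Icc (l + 1) u, (-1) ^ (l + 1 + j) * a j := peel
        _ ≤ a (l + 1) - (a (l + 1) - M) := sub_le_sub ascent le_tail
        _ = M := sub_sub_cancel _ _

theorem abs_alternating_sum_le_sup' (hlu : l ≤ u) (ha : DescentsPersistOn a l u)
    (hl : 0 ≤ a l) (hu : 0 ≤ a u) :
    |∑ j ∈ Icc l u, (-1) ^ j * a j| ≤ (Icc l u).sup' (nonempty_Icc.2 hlu) a := by
  set M := (Icc l u).sup' (nonempty_Icc.2 hlu) a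
  obtain ⟨le_sum, sum_le⟩ : ∑ j ∈ Icc l u, (-1) ^ (l + j) * a j ∈ Set.Icc (a l - M) M :=
    ha.alternating_sum_mem_Icc hlu hu fun j hj => le_sup' a hj
  have sign : ∑ j ∈ Icc l u, (-1) ^ (l + j) * a j = (-1) ^ l * ∑ j ∈ Icc l u, (-1) ^ j * a j := by
    simp only [pow_add, mul_assoc, mul_sum]
  have neg_le_sum : -M ≤ ∑ j ∈ Icc l u, (-1) ^ (l + j) * a j :=
    (neg_le_sub_iff_le_add.2 (le_add_of_nonneg_left hl)).trans le_sum
  calc |∑ j ∈ Icc l u, (-1) ^ j * a j|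
      = |∑ j ∈ Icc l u, (-1) ^ (l + j) * a j| := by
        rw [sign, abs_mul, abs_neg_one_pow, one_mul]
    _ ≤ M := abs_le.2 ⟨neg_le_sum, sum_le⟩

end DescentsPersistOn

end AlternatingSum

lemma descentsPersistOn_of_mul_le_sq {R : Type*} [Semiring R] [LinearOrder R]
    [IsStrictOrderedRing R] {a : ℕ → R} {l u : ℕ} (hpos : ∀ j ∈ Icc l u, 0 < a j)
    (hlog : ∀ j, l ≤ j → j + 2 ≤ u → a j * a (j + 2) ≤ a (j + 1) ^ 2) :
    DescentsPersistOn a l u := by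
  intro j hlj hju descent
  have hj : 0 < a j := hpos j (mem_Icc.2 ⟨hlj, by omega⟩)
  have hj' : 0 < a (j + 1) := hpos (j + 1) (mem_Icc.2 ⟨by omega, by omega⟩)
  refine le_of_mul_le_mul_left ?_ hj
  calc a j * a (j + 2) ≤ a (j + 1) ^ 2 := hlog j hlj hju
    _ = a (j + 1) * a (j + 1) := sq _
    _ ≤ a j * a (j + 1) := mul_le_mul_of_nonneg_right descent hj'.le

lemma choose_mul_choose_add_two_le_sq (n j : ℕ) :
    n.choose j * n.choose (j + 2) ≤ n.choose (j + 1) ^ 2 := by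
  rcases le_or_gt n j with hnj | hjn
  · simp [Nat.choose_eq_zero_of_lt (show n < j + 2 by omega)]
  have hpos : 0 < (j + 2) * (n - j) := Nat.mul_pos (by omega) (by omega)
  refine Nat.le_of_mul_le_mul_right ?_ hpos
  calc n.choose j * n.choose (j + 2) * ((j + 2) * (n - j))
      = (n.choose j * (n - j)) * (n.choose (j + 2) * (j + 2)) := by ring
    _ = (n.choose (j + 1) * (j + 1)) * (n.choose (j + 1) * (n - (j + 1))) := by
        rw [← Nat.choose_succ_right_eq n j, Nat.choose_succ_right_eq n (j + 1)]
    _ = n.choose (j + 1) ^ 2 * ((j + 1) * (n - (j + 1))) := by ring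
    _ ≤ n.choose (j + 1) ^ 2 * ((j + 2) * (n - j)) := by gcongr <;> omega

/-- The magnitude `C(N,k)⁻¹ C(r,j) C(N-r,k-j) x^j` of the `j`-th summand of a Krawtchouk
polynomial, with a real weight `x` in place of `1 / m`. -/
def krawtchoukTerm (x : ℝ) (N k r j : ℕ) : ℝ :=
  (N.choose k : ℝ)⁻¹ * r.choose j * (N - r).choose (k - j) * x ^ j

section KrawtchoukTerm

variable {x : ℝ} {N k r j : ℕ}

lemma krawtchoukTerm_pos (hx : 0 < x) (hr : r ≤ N) (hk : k ≤ N)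
    (hj : j ∈ Icc (r + k - N) (min r k)) : 0 < krawtchoukTerm x N k r j := by
  rw [mem_Icc] at hj
  have hNk : 0 < N.choose k := Nat.choose_pos hk
  have hrj : 0 < r.choose j := Nat.choose_pos (by omega)
  have hNrkj : 0 < (N - r).choose (k - j) := Nat.choose_pos (by omega)
  unfold krawtchoukTerm
  positivity

lemma krawtchoukTerm_mul_le_sq (hjk : j + 2 ≤ k) :
    krawtchoukTerm x N k r j * krawtchoukTerm x N k r (j + 2) ≤
      krawtchoukTerm x N k r (j + 1) ^ 2 := by
  obtain ⟨t, rfl⟩ : ∃ t, k = j + 2 + t := Nat.exists_eq_add_of_le hjk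
  have sub_j : j + 2 + t - j = t + 2 := by omega
  have sub_j_one : j + 2 + t - (j + 1) = t + 1 := by omega
  have sub_j_two : j + 2 + t - (j + 2) = t := by omega
  have left_factor : (r.choose j * r.choose (j + 2) : ℝ) ≤ (r.choose (j + 1) : ℝ) ^ 2 :=
    mod_cast choose_mul_choose_add_two_le_sq r j
  have right_factor : ((N - r).choose t * (N - r).choose (t + 2) : ℝ) ≤
      ((N - r).choose (t + 1) : ℝ) ^ 2 :=
    mod_cast choose_mul_choose_add_two_le_sq (N - r) t
  simp only [krawtchoukTerm, sub_j, sub_j_one, sub_j_two]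
  set c : ℝ := ((N.choose (j + 2 + t) : ℝ)⁻¹ * x ^ (j + 1)) ^ 2
  calc _ = c * ((r.choose j * r.choose (j + 2)) *
        ((N - r).choose t * (N - r).choose (t + 2))) := by ring
    _ ≤ c * ((r.choose (j + 1) : ℝ) ^ 2 * ((N - r).choose (t + 1) : ℝ) ^ 2) := by gcongr
    _ = _ := by ring

lemma descentsPersistOn_krawtchoukTerm (hx : 0 < x) (hr : r ≤ N) (hk : k ≤ N) :
    DescentsPersistOn (krawtchoukTerm x N k r) (r + k - N) (min r k) :=
  descentsPersistOn_of_mul_le_sq (fun _ => krawtchoukTerm_pos hx hr hk)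
    fun _ _ hj => krawtchoukTerm_mul_le_sq (hj.trans (min_le_right r k))

end KrawtchoukTerm

lemma kraw_eq_sum_krawtchoukTerm (m N k r : ℕ) :
    kraw m N k r =
      ∑ j ∈ Icc (r + k - N) (min r k), (-1) ^ j * krawtchoukTerm (m : ℝ)⁻¹ N k r j := by
  simp only [kraw, krawtchoukTerm, mul_assoc]

theorem statement18_general (x : ℝ) (hx : 0 < x) (N r k : ℕ) (hr : r ≤ N) (hk : k ≤ N) :
    |∑ j ∈ Icc (r + k - N) (min r k), (-1) ^ j * krawtchoukTerm x N k r j| ≤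
      (Icc (r + k - N) (min r k)).sup' (nonempty_Icc.mpr (by omega)) (krawtchoukTerm x N k r) := by
  have hlu : r + k - N ≤ min r k := by omega
  have nonneg : ∀ j ∈ Icc (r + k - N) (min r k), 0 ≤ krawtchoukTerm x N k r j :=
    fun _ hj => (krawtchoukTerm_pos hx hr hk hj).le
  exact (descentsPersistOn_krawtchoukTerm hx hr hk).abs_alternating_sum_le_sup' hlu
    (nonneg _ (left_mem_Icc.2 hlu)) (nonneg _ (right_mem_Icc.2 hlu))

theorem statement18 (m : ℕ) (hm : 2 ≤ m) (N r k : ℕ) (hr : r ≤ N) (hk : k ≤ N) :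
    |kraw m N k r| ≤
      (Finset.Icc (r + k - N) (min r k)).sup'
        (Finset.nonempty_Icc.mpr (by omega)) (fun j => aKraw m N k r j) := by
  have hx : 0 < (m : ℝ)⁻¹ := inv_pos.2 (Nat.cast_pos.2 (by omega))
  rw [kraw_eq_sum_krawtchoukTerm]
  exact statement18_general (m : ℝ)⁻¹ hx N r k hr hk
end
end

section
/- Let 0 ≤ r ≤ k ≤ N be integers, set ℓ = max(0, r+k−N) and a_j = C(N,k)^{−1} · C(r,j) · C(N−r, k−j) · m^{−j} for integers ℓ ≤ j ≤ r, and let n be the least integer in [ℓ, r] such that a_j ≤ a_n for all integers j ∈ [ℓ, r]. There exists a constant c = c(m) > 0, depending only on m, such that whenever n > 0 and r·k ≥ 2·N·m, one has n ≥ c·r·k/N. -/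
noncomputable section

/-!
The ratio of consecutive terms is
`a_{j+1} / a_j = (r - j) (k - j) / (m (j + 1) (N - r - k + j + 1))`.
At a maximiser `n` below the right end of the range this ratio is at most `1`, and clearing
denominators turns that into `(r + 1) (k + 1) ≤ m (n + 1) (N + 2)`; for `m = 1` this is the
classical bound for the mode of the hypergeometric distribution. Hence
`r k ≤ m (n + 1) N ≤ 2 m n N`.
-/

theorem cast_choose_succ_mul {R : Type*} [CommRing R] (n j : ℕ) :
    (n.choose (j + 1) : R) * (j + 1) = n.choose j * (n - j) := by
  rcases le_or_gt j n with hjn | hnj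
  · rw [← Nat.cast_sub hjn]
    exact_mod_cast congrArg (Nat.cast : ℕ → R) (Nat.choose_succ_right_eq n j)
  · simp [Nat.choose_eq_zero_of_lt hnj, Nat.choose_eq_zero_of_lt (hnj.trans j.lt_succ_self)]

section aKraw

variable {m N k r j : ℕ}

theorem aKraw_pos (hm : 0 < m) (hkN : k ≤ N) (hjr : j ≤ r) (hj : r + k - N ≤ j) :
    0 < aKraw m N k r j := by
  have hN : 0 < N.choose k := Nat.choose_pos hkN
  have hr : 0 < r.choose j := Nat.choose_pos hjr
  have hNr : 0 < (N - r).choose (k - j) := Nat.choose_pos (by omega)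
  unfold aKraw
  positivity

theorem aKraw_succ_mul (hm : m ≠ 0) (hrN : r ≤ N) (hjk : j < k) :
    aKraw m N k r (j + 1) * (m * (j + 1) * (N - r - k + j + 1)) =
      aKraw m N k r j * ((r - j) * (k - j)) := by
  obtain ⟨p, rfl⟩ : ∃ p, k = j + (p + 1) := ⟨k - j - 1, by omega⟩
  have hsub : j + (p + 1) - (j + 1) = p := by omega
  have hr := cast_choose_succ_mul (R := ℝ) r j
  have hNr := cast_choose_succ_mul (R := ℝ) (N - r) p
  have hm_inv : (m : ℝ)⁻¹ * m = 1 := inv_mul_cancel₀ (Nat.cast_ne_zero.mpr hm)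
  rw [Nat.cast_sub hrN] at hNr
  simp only [aKraw, hsub, Nat.add_sub_cancel_left, pow_succ]
  push_cast
  calc
    _ = ((N.choose (j + (p + 1)) : ℝ))⁻¹ * (r.choose (j + 1) * (j + 1)) *
          ((N - r).choose p * (N - r - p)) * (m : ℝ)⁻¹ ^ j * ((m : ℝ)⁻¹ * m) := by ring
    _ = _ := by rw [hr, ← hNr, hm_inv]; ring

theorem sub_mul_sub_le_of_aKraw_succ_le (hm : 0 < m) (hrN : r ≤ N) (hkN : k ≤ N) (hjr : j ≤ r)
    (hjk : j < k) (hj : r + k - N ≤ j) (h : aKraw m N k r (j + 1) ≤ aKraw m N k r j) :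
    ((r : ℝ) - j) * (k - j) ≤ m * (j + 1) * (N - r - k + j + 1) := by
  have hj' : (r : ℝ) + k ≤ N + j := by exact_mod_cast (by omega : r + k ≤ N + j)
  have hgap : (0 : ℝ) ≤ N - r - k + j + 1 := by linarith
  refine le_of_mul_le_mul_left ?_ (aKraw_pos hm hkN hjr hj)
  rw [← aKraw_succ_mul hm.ne' hrN hjk]
  gcongr

end aKraw

section OrderedRing

variable {R : Type*} [CommRing R] [LinearOrder R] [IsStrictOrderedRing R] {m N k r n : R}

theorem succ_mul_succ_le_of_sub_mul_sub_le (hm : 1 ≤ m) (hn : 0 ≤ n) (hnr : n ≤ r) (hk : 0 ≤ k)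
    (h : (r - n) * (k - n) ≤ m * (n + 1) * (N - r - k + n + 1)) :
    (r + 1) * (k + 1) ≤ m * (n + 1) * (N + 2) := by
  have hslack : 0 ≤ (m - 1) * (n + 1) * (r + k - n + 1) :=
    mul_nonneg (mul_nonneg (by linarith) (by linarith)) (by linarith)
  linear_combination h + hslack

theorem mul_le_mul_of_succ_mul_succ_le {t : R} (hr : 0 ≤ r) (hk : 0 ≤ k) (hrN : r ≤ N)
    (hkN : k ≤ N) (h : (r + 1) * (k + 1) ≤ t * (N + 2)) : r * k ≤ t * N := by
  have hN : 0 ≤ N := hr.trans hrN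
  have hcross : r * k * (N + 2) ≤ (r + 1) * (k + 1) * N := by
    linear_combination r * hkN + k * hrN + hN
  refine le_of_mul_le_mul_right ?_ (by linarith : 0 < N + 2)
  calc
    r * k * (N + 2) ≤ (r + 1) * (k + 1) * N := hcross
    _ ≤ t * (N + 2) * N := by gcongr
    _ = t * N * (N + 2) := by ring

end OrderedRing

-- The range stops at `min r k`: for `j > k` the truncated `k - j` makes the second binomial `1`
-- instead of `0`.
theorem mul_le_of_forall_aKraw_le {m N k r n : ℕ} (hm : 0 < m) (hrN : r ≤ N) (hkN : k ≤ N)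
    (hn : r + k - N ≤ n)
    (hmax : ∀ j ∈ Finset.Icc (r + k - N) (min r k), aKraw m N k r j ≤ aKraw m N k r n) :
    (r : ℝ) * k ≤ m * (n + 1) * N := by
  have hm' : (1 : ℝ) ≤ m := by exact_mod_cast hm
  rcases lt_or_ge n (min r k) with hlt | hge
  · obtain ⟨hnr, hnk⟩ := lt_min_iff.mp hlt
    have hstep : aKraw m N k r (n + 1) ≤ aKraw m N k r n :=
      hmax _ (Finset.mem_Icc.mpr ⟨by omega, hlt⟩)
    have hratio := sub_mul_sub_le_of_aKraw_succ_le hm hrN hkN hnr.le hnk hn hstep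
    exact mul_le_mul_of_succ_mul_succ_le r.cast_nonneg k.cast_nonneg (Nat.cast_le.mpr hrN)
      (Nat.cast_le.mpr hkN) (succ_mul_succ_le_of_sub_mul_sub_le hm' n.cast_nonneg
        (Nat.cast_le.mpr hnr.le) k.cast_nonneg hratio)
  · have hmin : min r k ≤ m * (n + 1) := hge.trans (by nlinarith)
    have hmul : r * k ≤ m * (n + 1) * N :=
      calc
        r * k = min r k * max r k := (min_mul_max r k).symm
        _ ≤ m * (n + 1) * N := Nat.mul_le_mul hmin (max_le hrN hkN)
    exact_mod_cast hmul

theorem statement19_general {m N k r n : ℕ} (hm : 0 < m) (hrN : r ≤ N) (hkN : k ≤ N)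
    (hn : n ∈ Finset.Icc (r + k - N) (min r k))
    (hmax : ∀ j ∈ Finset.Icc (r + k - N) (min r k), aKraw m N k r j ≤ aKraw m N k r n)
    (hn0 : 0 < n) :
    1 / (2 * m) * r * k / N ≤ (n : ℝ) := by
  obtain ⟨hln, hnmin⟩ := Finset.mem_Icc.mp hn
  have hN : 0 < N := by omega
  have hn1 : (1 : ℝ) ≤ n := by exact_mod_cast hn0
  have hbound : (r : ℝ) * k ≤ n * (2 * m * N) :=
    calc
      (r : ℝ) * k ≤ m * (n + 1) * N := mul_le_of_forall_aKraw_le hm hrN hkN hln hmax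
      _ ≤ m * (n + n) * N := by gcongr
      _ = n * (2 * m * N) := by ring
  calc
    1 / (2 * m) * r * k / N = (r : ℝ) * k / (2 * m * N) := by field_simp
    _ ≤ n := (div_le_iff₀ (by positivity)).mpr hbound

theorem statement19 (m : ℕ) (hm : 2 ≤ m) :
    ∃ c : ℝ, 0 < c ∧ ∀ N k r n : ℕ, r ≤ k → k ≤ N →
      -- `n` lies in `[ℓ, r]`, where `ℓ = max (0, r + k - N)` is natural subtraction
      n ∈ Finset.Icc (r + k - N) r →
      -- `a_n` is a maximal summand magnitude on `[ℓ, r]`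
      (∀ j ∈ Finset.Icc (r + k - N) r, aKraw m N k r j ≤ aKraw m N k r n) →
      -- and `n` is least with this property
      (∀ n' ∈ Finset.Icc (r + k - N) r,
        (∀ j ∈ Finset.Icc (r + k - N) r, aKraw m N k r j ≤ aKraw m N k r n') → n ≤ n') →
      0 < n → 2 * N * m ≤ r * k →
      c * r * k / N ≤ (n : ℝ) := by
  refine ⟨1 / (2 * m), by positivity, fun N k r n hrk hkN hn hmax _ hn0 _ => ?_⟩
  exact statement19_general (by omega) (hrk.trans hkN) hkN (by rwa [min_eq_left hrk])
    (by rwa [min_eq_left hrk]) hn0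
end
end
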